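/- arXiv:1410.2336 — 8 statements merged into one kernel-verified Lean document; each statement's English description precedes it below -/
import Mathlib

section
/- Let u, u′ ∈ ℂ^{2n} and A, A′ ∈ sp_{2n}(ℂ). Suppose there exists g ∈ GL_{2n}(ℂ) such that g u = u′, θ(g) u = u′, and g A g⁻¹ = A′ (that is, g maps the point (u, −uᵀ) + A of the enhanced Lie algebra L̃ to (u′, −u′ᵀ) + A′ under the enhanced action). Then there exists h ∈ Sp_{2n}(ℂ) such that h u = u′ and h A h⁻¹ = A′. In other words, every GL_{2n}(ℂ)-orbit in L̃ = ℂ^{2n} ⊕ (ℂ^{2n})* ⊕ gl_{2n}(ℂ) meets the embedded subspace L = ℂ^{2n} ⊕ sp_{2n}(ℂ) (embedded via u + A ↦ (u, −uᵀ) + A) in at most one Sp_{2n}(ℂ)-orbit. -/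
open Matrix

/-- The standard symplectic form matrix `J = [[0, 1ₙ], [−1ₙ, 0]]` on `ℂ^{2n}`,
with `ℂ^{2n}` indexed by `Fin n ⊕ Fin n`. -/
noncomputable def J (n : ℕ) : Matrix (Fin n ⊕ Fin n) (Fin n ⊕ Fin n) ℂ :=
  Matrix.fromBlocks 0 1 (-1) 0

/-- The involutive anti-automorphism `σ(g) = J⁻¹ gᵀ J`. -/
noncomputable def sigmaG (n : ℕ) (g : Matrix (Fin n ⊕ Fin n) (Fin n ⊕ Fin n) ℂ) :
    Matrix (Fin n ⊕ Fin n) (Fin n ⊕ Fin n) ℂ :=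
  (J n)⁻¹ * gᵀ * J n

/-- The involutive automorphism `θ(g) = σ(g)⁻¹`. -/
noncomputable def thetaG (n : ℕ) (g : Matrix (Fin n ⊕ Fin n) (Fin n ⊕ Fin n) ℂ) :
    Matrix (Fin n ⊕ Fin n) (Fin n ⊕ Fin n) ℂ :=
  (sigmaG n g)⁻¹

/-- The symplectic Lie algebra `sp_{2n}(ℂ) = {A : Aᵀ J + J A = 0}`. -/
def spLie (n : ℕ) : Set (Matrix (Fin n ⊕ Fin n) (Fin n ⊕ Fin n) ℂ) :=
  {A | Aᵀ * J n + J n * A = 0}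

/-!
Let `s = σ(g) g`. It is `σ`-fixed and invertible, it fixes `u` because `g u = θ(g) u`, and it
commutes with `A` because `A` and `g A g⁻¹` are both skew-adjoint. Over an algebraically closed
field of characteristic different from `2`, an invertible `s` has a square root `r = p(s)` with `p`
a polynomial normalized by `p(1) = 1`. Being a polynomial in `s`, the root `r` is again `σ`-fixed,
fixes `u` and commutes with `A`, so the isometric part `h = g r⁻¹` of the polar decomposition
`g = h r` is the required symplectic matrix.
-/

section PolynomialSquareRoots

open Polynomial

theorem isSquare_of_isNilpotent_sq_sub {S : Type*} [CommRing S] (h2 : IsUnit (2 : S)) {a x : S}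
    (ha : IsUnit a) (hx : IsNilpotent (x ^ 2 - a)) : IsSquare a := by
  have hx_unit : IsUnit x := by
    refine (isUnit_pow_iff two_ne_zero).1 ?_
    simpa only [add_sub_cancel] using hx.isUnit_add_left_of_commute ha (Commute.all _ _)
  have h_eval : aeval x (X ^ 2 - C a) = x ^ 2 - a := by simp
  have h_deriv : aeval x (derivative (X ^ 2 - C a)) = 2 * x := by simp [one_add_one_eq_two]
  -- Newton's method lifts `x` to an exact root of `X² - a`.
  obtain ⟨r, ⟨-, hr⟩, -⟩ := existsUnique_nilpotent_sub_and_aeval_eq_zero (P := X ^ 2 - C a) (x := x)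
    (h_eval ▸ hx) (h_deriv ▸ h2.mul hx_unit)
  refine ⟨r, (sub_eq_zero.1 ?_).symm⟩
  simpa [pow_two] using hr

variable {K : Type*} [Field K] {f : K[X]}

theorem dvd_pow_card_roots_of_isRoot (hf : f.Splits) (hf0 : f ≠ 0) {q : K[X]}
    (hq : ∀ a, f.IsRoot a → q.IsRoot a) : f ∣ q ^ f.roots.card := by
  have h_prod : (f.roots.map fun a ↦ X - C a).prod ∣ (f.roots.map fun _ ↦ q).prod :=
    Multiset.prod_dvd_prod_of_dvd _ _ fun a ha ↦ dvd_iff_isRoot.2 (hq a (isRoot_of_mem_roots ha))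
  have h_lead : IsUnit (C f.leadingCoeff) :=
    isUnit_C.2 (isUnit_iff_ne_zero.2 (leadingCoeff_ne_zero.2 hf0))
  rw [Multiset.map_const', Multiset.prod_replicate] at h_prod
  conv_lhs => rw [hf.eq_prod_roots]
  exact h_lead.mul_left_dvd.2 h_prod

theorem exists_dvd_pow_sq_sub_X (hf : f.Splits) (hf0 : f ≠ 0)
    (hsq : ∀ a, f.IsRoot a → IsSquare a) : ∃ (q : K[X]) (k : ℕ), f ∣ (q ^ 2 - X) ^ k := by
  classical
  choose! b hb using hsq
  have h_interp (a : K) (ha : f.IsRoot a) :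
      (Lagrange.interpolate f.roots.toFinset id b).eval a = b a :=
    Lagrange.eval_interpolate_at_node (v := id) b Function.injective_id.injOn
      (Multiset.mem_toFinset.2 ((mem_roots hf0).2 ha))
  refine ⟨Lagrange.interpolate f.roots.toFinset id b, f.roots.card,
    dvd_pow_card_roots_of_isRoot hf hf0 fun a ha ↦ ?_⟩
  rw [IsRoot.def, eval_sub, eval_pow, eval_X, h_interp a ha, pow_two, ← hb a ha, sub_self]

variable [NeZero (2 : K)]

theorem exists_dvd_sq_sub_X (hf : f.Splits) (hfX : IsCoprime X f)
    (hsq : ∀ a, f.IsRoot a → IsSquare a) : ∃ p : K[X], f ∣ p ^ 2 - X := by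
  have hf0 : f ≠ 0 := by
    rintro rfl
    exact not_isUnit_X (isCoprime_zero_right.1 hfX)
  obtain ⟨q, k, hqk⟩ := exists_dvd_pow_sq_sub_X hf hf0 hsq
  have h2 : IsUnit (2 : AdjoinRoot f) := by
    simpa only [map_ofNat] using (isUnit_iff_ne_zero.2 (two_ne_zero (α := K))).map (AdjoinRoot.of f)
  have h_root : IsUnit (AdjoinRoot.mk f X) := by
    simpa only [AdjoinRoot.mk_self, isCoprime_zero_right] using hfX.map (AdjoinRoot.mk f)
  have h_nil : IsNilpotent (AdjoinRoot.mk f q ^ 2 - AdjoinRoot.mk f X) :=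
    ⟨k, by rwa [← map_pow, ← map_sub, ← map_pow, AdjoinRoot.mk_eq_zero]⟩
  obtain ⟨r, hr⟩ := isSquare_of_isNilpotent_sq_sub h2 h_root h_nil
  obtain ⟨p, rfl⟩ := AdjoinRoot.mk_surjective r
  exact ⟨p, by rw [← AdjoinRoot.mk_eq_zero, map_sub, map_pow, hr, pow_two, sub_self]⟩

theorem exists_dvd_sq_sub_X_and_eval_one (hf : f.Splits) (hfX : IsCoprime X f)
    (hsq : ∀ a, f.IsRoot a → IsSquare a) : ∃ p : K[X], f ∣ p ^ 2 - X ∧ p.eval 1 = 1 := by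
  have hX : IsCoprime (X : K[X]) (X - C 1) := ⟨1, -1, by simp⟩
  -- The extra factor `X - 1` forces `p(1)² = 1`, and the sign of `p` is free.
  obtain ⟨p, hp⟩ := exists_dvd_sq_sub_X (hf.mul (Splits.X_sub_C 1))
    (hfX.mul_right hX) fun a ha ↦ by
      rcases root_mul.1 ha with ha | ha
      · exact hsq a ha
      · rw [← root_X_sub_C.1 ha]
        exact IsSquare.one
  have hp_one : p.eval 1 ^ 2 = 1 := by
    have := dvd_iff_isRoot.1 (dvd_of_mul_left_dvd hp)
    rwa [IsRoot.def, eval_sub, eval_pow, eval_X, sub_eq_zero] at this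
  have hfp : f ∣ p ^ 2 - X := dvd_of_mul_right_dvd hp
  rcases sq_eq_one_iff.1 hp_one with h | h
  · exact ⟨p, hfp, h⟩
  · exact ⟨-p, by rwa [neg_sq], by rw [eval_neg, h, neg_neg]⟩

end PolynomialSquareRoots

section AlgebraSquareRoots

open Polynomial

variable {K R : Type*} [Field K] [Ring R] [Algebra K R] {s : R}

theorem isCoprime_X_minpoly_of_isUnit (hs : IsIntegral K s) (hs_unit : IsUnit s) :
    IsCoprime X (minpoly K s) := by
  refine (prime_X.irreducible.coprime_iff_not_dvd).2 fun ⟨q, hq⟩ ↦ ?_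
  have h_mul : s * aeval s q = 0 := by
    simpa only [hq, map_mul, aeval_X] using minpoly.aeval K s
  have h_dvd : X * q ∣ 1 * q := by
    rw [one_mul, ← hq]
    exact minpoly.dvd K s (hs_unit.mul_right_eq_zero.1 h_mul)
  have hq0 : q ≠ 0 := right_ne_zero_of_mul (hq ▸ minpoly.ne_zero hs)
  exact not_isUnit_X (isUnit_of_dvd_one ((mul_dvd_mul_iff_right hq0).1 h_dvd))

theorem exists_aeval_sq_eq_and_eval_one [IsAlgClosed K] [NeZero (2 : K)] (hs : IsIntegral K s)
    (hs_unit : IsUnit s) : ∃ p : K[X], aeval s p ^ 2 = s ∧ p.eval 1 = 1 := by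
  obtain ⟨p, hp, hp_one⟩ := exists_dvd_sq_sub_X_and_eval_one (IsAlgClosed.splits (minpoly K s))
    (isCoprime_X_minpoly_of_isUnit hs hs_unit) fun a _ ↦ IsAlgClosed.exists_eq_mul_self a
  refine ⟨p, sub_eq_zero.1 ?_, hp_one⟩
  simpa only [map_sub, map_pow, aeval_X] using (minpoly.dvd_iff).1 hp

end AlgebraSquareRoots

section Forms

open Polynomial

variable {K m : Type*} [CommRing K] [Fintype m] [DecidableEq m] {B s : Matrix m m K}

theorem aeval_mulVec_of_mulVec_eq_smul {u : m → K} {μ : K} (hu : s *ᵥ u = μ • u) (p : K[X]) :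
    aeval s p *ᵥ u = p.eval μ • u := by
  have h_pow (k : ℕ) : (s ^ k) *ᵥ u = μ ^ k • u := by
    induction k with
    | zero => simp
    | succ k ih => rw [pow_succ, ← mulVec_mulVec, hu, mulVec_smul, ih, smul_smul, pow_succ']
  induction p using Polynomial.induction_on' with
  | add p q hp hq => rw [map_add, add_mulVec, hp, hq, eval_add, add_smul]
  | monomial k a =>
    rw [aeval_monomial, ← Algebra.smul_def, smul_mulVec, h_pow, smul_smul, eval_monomial]

theorem isAdjointPair_aeval {t : Matrix m m K} (h : IsAdjointPair B B s t) (p : K[X]) :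
    IsAdjointPair B B (aeval s p) (aeval t p) := by
  rw [IsAdjointPair] at h ⊢
  have h_pow (k : ℕ) : (s ^ k)ᵀ * B = B * t ^ k := by
    rw [transpose_pow]
    exact (SemiconjBy.pow_right (show SemiconjBy B t sᵀ from h.symm) k).eq.symm
  induction p using Polynomial.induction_on' with
  | add p q hp hq => rw [map_add, map_add, transpose_add, Matrix.add_mul, hp, hq, Matrix.mul_add]
  | monomial k a =>
    rw [aeval_monomial, aeval_monomial, ← Algebra.smul_def, ← Algebra.smul_def, transpose_smul,
      Matrix.smul_mul, h_pow, Matrix.mul_smul]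

/-- The adjoint `B⁻¹ gᵀ B` of `g` for the bilinear form with Gram matrix `B`. It is a genuine
adjoint only for invertible `B`, because of the junk value of `B⁻¹`. For the standard symplectic
form it is the anti-automorphism `σ`. -/
noncomputable def formAdjoint (B g : Matrix m m K) : Matrix m m K :=
  B⁻¹ * gᵀ * B

variable {g : Matrix m m K}

theorem mul_formAdjoint (hB : IsUnit B) (g : Matrix m m K) : B * formAdjoint B g = gᵀ * B := by
  rw [formAdjoint, Matrix.mul_assoc,
    mul_nonsing_inv_cancel_left _ _ ((isUnit_iff_isUnit_det B).1 hB)]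

theorem isUnit_formAdjoint (hB : IsUnit B) (hg : IsUnit g) : IsUnit (formAdjoint B g) :=
  ((isUnit_nonsing_inv_iff.2 hB).mul ((isUnit_transpose g).2 hg)).mul hB

theorem mul_formAdjoint_mul_self (hB : IsUnit B) (g : Matrix m m K) :
    B * (formAdjoint B g * g) = gᵀ * B * g := by
  rw [← Matrix.mul_assoc, mul_formAdjoint hB]

theorem isSelfAdjoint_formAdjoint_mul_self (hB : IsUnit B) {ε : Kˣ} (hε : Bᵀ = ε • B)
    (g : Matrix m m K) : B.IsSelfAdjoint (formAdjoint B g * g) := by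
  rw [Matrix.IsSelfAdjoint, IsAdjointPair]
  apply smul_left_cancel ε
  calc ε • ((formAdjoint B g * g)ᵀ * B) = (B * (formAdjoint B g * g))ᵀ := by
        rw [transpose_mul B, hε, Matrix.mul_smul]
    _ = gᵀ * Bᵀ * g := by
        rw [mul_formAdjoint_mul_self hB, transpose_mul, transpose_mul, transpose_transpose,
          Matrix.mul_assoc]
    _ = ε • (B * (formAdjoint B g * g)) := by
        rw [hε, Matrix.mul_smul, Matrix.smul_mul, mul_formAdjoint_mul_self hB]

theorem commute_of_isAdjointPair_mul {A C : Matrix m m K} (hB : IsUnit B)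
    (h : IsAdjointPair B B A C) (hs : IsAdjointPair (B * s) (B * s) A C) : Commute C s := by
  rw [IsAdjointPair] at h hs
  apply hB.mul_left_cancel
  rw [← Matrix.mul_assoc, ← h, Matrix.mul_assoc, hs, Matrix.mul_assoc]

theorem commute_formAdjoint_mul_self {A : Matrix m m K} (hB : IsUnit B) (hg : IsUnit g)
    (hA : B.IsSkewAdjoint A) (hA' : B.IsSkewAdjoint (g * A * g⁻¹)) :
    Commute A (formAdjoint B g * g) := by
  refine Commute.neg_left_iff.1 (commute_of_isAdjointPair_mul hB hA ?_)
  rw [mul_formAdjoint_mul_self hB, isAdjointPair_equiv _ _ _ g hg, Matrix.mul_neg, Matrix.neg_mul]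
  exact hA'

theorem formAdjoint_mul_self_mulVec {u : m → K} (hB : IsUnit B) (hg : IsUnit g)
    (hu : (formAdjoint B g)⁻¹ *ᵥ u = g *ᵥ u) : (formAdjoint B g * g) *ᵥ u = u := by
  rw [← mulVec_mulVec, ← hu, mulVec_mulVec,
    mul_nonsing_inv _ ((isUnit_iff_isUnit_det _).1 (isUnit_formAdjoint hB hg)), one_mulVec]

theorem isometry_mul_inv_of_sq_eq_formAdjoint_mul_self {r : Matrix m m K} (hB : IsUnit B)
    (hr : B.IsSelfAdjoint r) (hr_unit : IsUnit r) (hrg : r ^ 2 = formAdjoint B g * g) :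
    (g * r⁻¹)ᵀ * B * (g * r⁻¹) = B := by
  have hr_det : IsUnit r.det := (isUnit_iff_isUnit_det r).1 hr_unit
  calc (g * r⁻¹)ᵀ * B * (g * r⁻¹) = (r⁻¹)ᵀ * (gᵀ * B * g) * r⁻¹ := by
        simp only [transpose_mul, Matrix.mul_assoc]
    _ = (r⁻¹)ᵀ * (B * r) := by
        rw [← mul_formAdjoint_mul_self hB, ← hrg, pow_two, Matrix.mul_assoc, Matrix.mul_assoc B,
          mul_nonsing_inv_cancel_right _ _ hr_det]
    _ = (r * r⁻¹)ᵀ * B := by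
        rw [← (show rᵀ * B = B * r from hr), ← Matrix.mul_assoc, ← transpose_mul]
    _ = B := by rw [mul_nonsing_inv _ hr_det, transpose_one, Matrix.one_mul]

end Forms

theorem exists_isSelfAdjoint_sqrt {K m : Type*} [Field K] [IsAlgClosed K] [NeZero (2 : K)]
    [Fintype m] [DecidableEq m] {B s : Matrix m m K} (hs_unit : IsUnit s)
    (hs_adj : B.IsSelfAdjoint s) :
    ∃ r : Matrix m m K, r ^ 2 = s ∧ B.IsSelfAdjoint r ∧
      (∀ u : m → K, s *ᵥ u = u → r *ᵥ u = u) ∧ ∀ A, Commute A s → Commute A r := by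
  obtain ⟨p, hp, hp_one⟩ :=
    exists_aeval_sq_eq_and_eval_one (Algebra.IsIntegral.isIntegral (R := K) s) hs_unit
  refine ⟨Polynomial.aeval s p, hp, isAdjointPair_aeval hs_adj p, fun u hu ↦ ?_, fun A hA ↦
    Algebra.commute_of_mem_adjoin_singleton_of_commute
      (Polynomial.aeval_mem_adjoin_singleton K s) hA⟩
  rw [aeval_mulVec_of_mulVec_eq_smul (by rw [hu, one_smul]), hp_one, one_smul]

theorem enhanced_orbit_embedding_Sp_general {K m : Type*} [Field K] [IsAlgClosed K]
    [NeZero (2 : K)] [Fintype m] [DecidableEq m] {B : Matrix m m K} (hB : IsUnit B) {ε : Kˣ}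
    (hε : Bᵀ = ε • B) {u u' : m → K} {A A' : Matrix m m K} (hA : B.IsSkewAdjoint A)
    (hA' : B.IsSkewAdjoint A') {g : Matrix m m K} (hg : IsUnit g) (h1 : g *ᵥ u = u')
    (h2 : (formAdjoint B g)⁻¹ *ᵥ u = u') (h3 : g * A * g⁻¹ = A') :
    ∃ h : Matrix m m K, hᵀ * B * h = B ∧ h *ᵥ u = u' ∧ h * A * h⁻¹ = A' := by
  subst h1 h3
  have hs_fix := formAdjoint_mul_self_mulVec hB hg h2
  have hs_comm := commute_formAdjoint_mul_self hB hg hA hA'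
  have hs_adj := isSelfAdjoint_formAdjoint_mul_self hB hε g
  have hs_unit : IsUnit (formAdjoint B g * g) := (isUnit_formAdjoint hB hg).mul hg
  obtain ⟨r, hr_sq, hr_adj, hr_fix, hr_comm⟩ := exists_isSelfAdjoint_sqrt hs_unit hs_adj
  have hr_unit : IsUnit r := (isUnit_pow_iff two_ne_zero).1 (hr_sq ▸ hs_unit)
  have hr_det : IsUnit r.det := (isUnit_iff_isUnit_det r).1 hr_unit
  refine ⟨g * r⁻¹, isometry_mul_inv_of_sq_eq_formAdjoint_mul_self hB hr_adj hr_unit hr_sq, ?_, ?_⟩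
  · calc (g * r⁻¹) *ᵥ u = (g * r⁻¹) *ᵥ (r *ᵥ u) := by rw [hr_fix u hs_fix]
      _ = g *ᵥ u := by rw [mulVec_mulVec, nonsing_inv_mul_cancel_right _ _ hr_det]
  · calc g * r⁻¹ * A * (g * r⁻¹)⁻¹ = g * (r⁻¹ * (A * r)) * g⁻¹ := by
          rw [Matrix.mul_inv_rev, nonsing_inv_nonsing_inv _ hr_det]
          simp only [Matrix.mul_assoc]
      _ = g * A * g⁻¹ := by rw [(hr_comm A hs_comm).eq, nonsing_inv_mul_cancel_left _ _ hr_det]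

theorem J_eq_neg_matrix_J (n : ℕ) : _root_.J n = -Matrix.J (Fin n) ℂ := by
  simp [_root_.J, Matrix.J, fromBlocks_neg]

theorem isUnit_J (n : ℕ) : IsUnit (_root_.J n) := by
  rw [J_eq_neg_matrix_J]
  exact ((isUnit_iff_isUnit_det _).2 (isUnit_det_J (Fin n) ℂ)).neg

theorem transpose_J (n : ℕ) : (_root_.J n)ᵀ = (-1 : ℂˣ) • _root_.J n := by
  rw [J_eq_neg_matrix_J, transpose_neg, Matrix.J_transpose, Units.neg_smul, one_smul]

theorem isSkewAdjoint_of_mem_spLie {n : ℕ} {A : Matrix (Fin n ⊕ Fin n) (Fin n ⊕ Fin n) ℂ}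
    (hA : A ∈ spLie n) : (_root_.J n).IsSkewAdjoint A := by
  rw [Matrix.IsSkewAdjoint, IsAdjointPair, Matrix.mul_neg]
  exact eq_neg_of_add_eq_zero_left hA

/-- Every `GL_{2n}(ℂ)`-orbit in the enhanced Lie algebra
`L̃ = ℂ^{2n} ⊕ (ℂ^{2n})* ⊕ gl_{2n}(ℂ)` meets the embedded subspace
`L = ℂ^{2n} ⊕ sp_{2n}(ℂ)` (embedded via `u + A ↦ (u, −uᵀ) + A`) in at most one
`Sp_{2n}(ℂ)`-orbit: if `g ∈ GL_{2n}(ℂ)` sends `(u, −uᵀ) + A` to `(u′, −u′ᵀ) + A′`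
(i.e. `g u = u′`, `θ(g) u = u′` and `g A g⁻¹ = A′`), then some `h ∈ Sp_{2n}(ℂ)`
satisfies `h u = u′` and `h A h⁻¹ = A′`. -/
theorem enhanced_orbit_embedding_Sp (n : ℕ) (hn : 1 ≤ n)
    (u u' : (Fin n ⊕ Fin n) → ℂ)
    (A A' : Matrix (Fin n ⊕ Fin n) (Fin n ⊕ Fin n) ℂ)
    (hA : A ∈ spLie n) (hA' : A' ∈ spLie n)
    (g : Matrix (Fin n ⊕ Fin n) (Fin n ⊕ Fin n) ℂ) (hg : IsUnit g)
    (h1 : g *ᵥ u = u') (h2 : thetaG n g *ᵥ u = u')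
    (h3 : g * A * g⁻¹ = A') :
    ∃ h : Matrix (Fin n ⊕ Fin n) (Fin n ⊕ Fin n) ℂ,
      hᵀ * J n * h = J n ∧ h *ᵥ u = u' ∧ h * A * h⁻¹ = A' :=
  enhanced_orbit_embedding_Sp_general (isUnit_J n) (transpose_J n)
    (isSkewAdjoint_of_mem_spLie hA) (isSkewAdjoint_of_mem_spLie hA') hg h1 h2 h3
end

section
/- Suppose that for every x ∈ L and every h ∈ G̃ with h·x = x and σ_G(h) = h, there exists f ∈ G̃ with f·x = x, σ_G(f) = f and f² = h. Then the natural map L/G → L̃/G̃ is injective: for all x, y ∈ L, if there exists g ∈ G̃ with g·x = y, then there exists g′ ∈ G with g′·x = y. Equivalently, every G̃-orbit in L̃ meets L in either the empty set or a single G-orbit. -/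
/-!
If `g • x = y` with `x, y ∈ L`, then also `σG g • y = x`, so `h = σG g * g` is a `σG`-fixed element
of the stabilizer of `x`. Given `f` in that stabilizer with `σG f * f = h`, the element `g * f⁻¹`
still maps `x` to `y`, and it lies in `G` because `σG g * g = σG f * f`. A `σG`-fixed square root
of `h` is such an `f`.

An involutive anti-automorphism of a group is a `StarMul` structure on it; the symmetric subgroup
`G` then consists of the unitary elements.
-/

section StarMul

variable {G X : Type*} [Group G] [StarMul G] [MulAction G X]

theorem star_smul_eq_of_smul_eq {σ : X → X} (hσ : ∀ (g : G) (x : X), σ (g • x) = (star g)⁻¹ • σ x)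
    {g : G} {x y : X} (hx : σ x = x) (hy : σ y = y) (hgx : g • x = y) : star g • y = x := by
  rw [← eq_inv_smul_iff]
  calc
    y = σ (g • x) := by rw [hgx, hy]
    _ = (star g)⁻¹ • x := by rw [hσ, hx]

theorem exists_mem_unitary_smul_eq_iff {g : G} {x y : X} (hgx : g • x = y) :
    (∃ u ∈ unitary G, u • x = y) ↔ ∃ f : G, f • x = x ∧ star f * f = star g * g := by
  constructor
  · rintro ⟨u, hu, hux⟩
    refine ⟨u⁻¹ * g, by rw [mul_smul, hgx, inv_smul_eq_iff, hux], ?_⟩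
    rw [eq_comm, ← Unitary.mul_inv_mem_iff]
    simpa using hu
  · rintro ⟨f, hfx, hf⟩
    refine ⟨g * f⁻¹, (Unitary.mul_inv_mem_iff g f).2 hf.symm, ?_⟩
    rw [mul_smul, inv_smul_eq_iff.2 hfx.symm, hgx]

theorem abstract_orbit_embedding_general {σ : X → X}
    (hσ : ∀ (g : G) (x : X), σ (g • x) = (star g)⁻¹ • σ x)
    (hstar : ∀ x : X, σ x = x → ∀ h : G, h • x = x → IsSelfAdjoint h →
      ∃ f : G, f • x = x ∧ star f * f = h)
    {x y : X} (hx : σ x = x) (hy : σ y = y) (hxy : ∃ g : G, g • x = y) :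
    ∃ u ∈ unitary G, u • x = y := by
  obtain ⟨g, hgx⟩ := hxy
  have hfix : (star g * g) • x = x := by
    rw [mul_smul, hgx, star_smul_eq_of_smul_eq hσ hx hy hgx]
  exact (exists_mem_unitary_smul_eq_iff hgx).2 (hstar x hx _ hfix (.star_mul_self g))

end StarMul

/-- Abstract orbit embedding theorem.  Let `G̃` be a group acting on a set `L̃`,
`σG` an involutive anti-automorphism of `G̃`, and `σL` an involution of `L̃`
satisfying `σL(g·x) = σG(g)⁻¹ · σL(x)`.  Put `G = {g : σG g = g⁻¹}` and
`L = {x : σL x = x}`.  Assume that for every `x ∈ L`, every `σG`-fixed element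
`h` of the stabilizer of `x` admits a `σG`-fixed square root `f` in the
stabilizer of `x`.  Then the natural map `L/G → L̃/G̃` is injective: whenever
`x, y ∈ L` lie in the same `G̃`-orbit, they lie in the same `G`-orbit. -/
theorem abstract_orbit_embedding {G X : Type*} [Group G] [MulAction G X]
    (σG : G → G)
    (hanti : ∀ g h : G, σG (g * h) = σG h * σG g)
    (hGinv : ∀ g : G, σG (σG g) = g)
    (σL : X → X) (hLinv : ∀ x : X, σL (σL x) = x)
    (hcompat : ∀ (g : G) (x : X), σL (g • x) = (σG g)⁻¹ • σL x)
    (hsq : ∀ x : X, σL x = x → ∀ h : G, h • x = x → σG h = h →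
      ∃ f : G, f • x = x ∧ σG f = f ∧ f ^ 2 = h) :
    ∀ x y : X, σL x = x → σL y = y → (∃ g : G, g • x = y) →
      ∃ g' : G, σG g' = g'⁻¹ ∧ g' • x = y := by
  intro x y hx hy hxy
  let _ : StarMul G := { star := σG, star_involutive := hGinv, star_mul := hanti }
  have hstar : ∀ x : X, σL x = x → ∀ h : G, h • x = x → IsSelfAdjoint h →
      ∃ f : G, f • x = x ∧ star f * f = h := by
    intro x hx h hhx hh
    obtain ⟨f, hfx, hf, hfh⟩ := hsq x hx h hhx hh
    exact ⟨f, hfx, by rw [show star f = f from hf, ← sq, hfh]⟩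
  obtain ⟨u, hu, hux⟩ := abstract_orbit_embedding_general hcompat hstar hx hy hxy
  exact ⟨u, eq_inv_of_mul_eq_one_left (Unitary.star_mul_self_of_mem hu), hux⟩
end

section
/- Let u, u′ ∈ ℂ^{2n} and let A, B, A′, B′ ∈ M_n(ℂ) be symmetric matrices (Aᵀ = A, Bᵀ = B, A′ᵀ = A′, B′ᵀ = B′). Suppose there exist a, b ∈ GL_n(ℂ) such that diag(a,b) u = u′, diag((bᵀ)⁻¹, (aᵀ)⁻¹) u = u′, a A b⁻¹ = A′ and b B a⁻¹ = B′. Then there exists c ∈ GL_n(ℂ) such that diag(c, (cᵀ)⁻¹) u = u′, c A cᵀ = A′ and (cᵀ)⁻¹ B c⁻¹ = B′. This realizes the orbit embedding (ℂ^{2n} ⊕ Sym_n(ℂ) ⊕ Sym_n(ℂ))/GL_n(ℂ) ↪ (ℂ^{2n} ⊕ (ℂ^{2n})* ⊕ M_n(ℂ) ⊕ M_n(ℂ))/(GL_n(ℂ) × GL_n(ℂ)). -/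
open Matrix

/-!
Put `θ(a, b) = ((bᵀ)⁻¹, (aᵀ)⁻¹)`, an involution of `GL_n × GL_n` whose fixed points are the pairs
`(c, (cᵀ)⁻¹)`. If `g = (a, b)` and `θ(g)` both carry the `θ`-fixed vector `v = (u, A, B)` to `v'`,
then `h = θ(g)⁻¹ g = (bᵀ a, aᵀ b)` fixes `v` and `θ(h) = h⁻¹`. If `f` is a polynomial with
`f(1) = 1` and `f(h)` is invertible, then `f(h)` fixes `v` as well. Over a separably closed field of
characteristic other than two, some such `f` gives an inverse square root `s = f(h)` of `h`, and
then `g s` is `θ`-fixed and still carries `v` to `v'`.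
-/

namespace EnhancedTheta

open Polynomial

section Squares

theorem isSquare_of_isNilpotent_sq_sub {R : Type*} [CommRing R] {u r : R}
    (h2 : IsUnit (2 : R)) (hu : IsUnit u) (hr : IsNilpotent (r ^ 2 - u)) : IsSquare u := by
  have r_unit : IsUnit r := by
    have : IsUnit (r ^ 2) := by
      simpa using hr.isUnit_add_left_of_commute hu (Commute.all _ _)
    exact (isUnit_pow_iff two_ne_zero).mp this
  obtain ⟨s, ⟨-, hs⟩, -⟩ := existsUnique_nilpotent_sub_and_aeval_eq_zero
    (P := X ^ 2 - C u) (x := r) (by simpa using hr)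
    (by simpa [one_add_one_eq_two] using ⟨h2, r_unit⟩)
  exact ⟨s, by simpa [sub_eq_zero, sq, eq_comm] using hs⟩

theorem exists_isNilpotent_sq_sub_of_isSquare_residue {R : Type*} [CommRing R]
    [IsArtinianRing R] {u : R}
    (h : ∀ m : MaximalSpectrum R, IsSquare (Ideal.Quotient.mk m.asIdeal u)) :
    ∃ r : R, IsNilpotent (r ^ 2 - u) := by
  choose s hs using h
  obtain ⟨t, ht⟩ := (IsArtinianRing.quotNilradicalEquivPi R).surjective s
  obtain ⟨r, rfl⟩ := Ideal.Quotient.mk_surjective t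
  refine ⟨r, mem_nilradical.mp ?_⟩
  rw [← Ideal.Quotient.eq]
  apply (IsArtinianRing.quotNilradicalEquivPi R).injective
  rw [map_pow, map_pow, ht, sq]
  exact funext fun m ↦ (hs m).symm

variable {K : Type*} [Field K] [IsSepClosed K] [NeZero (2 : K)]

variable (K) in
theorem isSquare_of_isUnit_of_isSepClosed {R : Type*} [CommRing R] [Algebra K R]
    [Module.Finite K R] {u : R} (hu : IsUnit u) : IsSquare u := by
  have : IsArtinianRing R := .of_finite K R
  have isUnit_two : IsUnit (2 : R) := by
    simpa only [map_ofNat] using (IsUnit.mk0 (2 : K) two_ne_zero).map (algebraMap K R)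
  have isSquare_residue (m : MaximalSpectrum R) : IsSquare (Ideal.Quotient.mk m.asIdeal u) := by
    let _ : Field (R ⧸ m.asIdeal) := Ideal.Quotient.field m.asIdeal
    have : IsSepClosed (R ⧸ m.asIdeal) := Algebra.IsAlgebraic.isSepClosed (F := K)
    have : NeZero (2 : R ⧸ m.asIdeal) :=
      ⟨by simpa only [map_ofNat] using (isUnit_two.map (Ideal.Quotient.mk m.asIdeal)).ne_zero⟩
    exact IsSepClosed.exists_eq_mul_self _
  obtain ⟨r, hr⟩ := exists_isNilpotent_sq_sub_of_isSquare_residue isSquare_residue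
  exact isSquare_of_isNilpotent_sq_sub isUnit_two hu hr

variable {E : Type*} [Ring E] [Algebra K E] [Module.Finite K E] {h : E}

open scoped IsMulCommutative nonZeroDivisors in
theorem exists_mul_aeval_sq_eq_one (hh : IsUnit h) :
    ∃ f : K[X], h * aeval h f ^ 2 = 1 := by
  let h' : Algebra.adjoin K {h} := ⟨h, Algebra.self_mem_adjoin_singleton K h⟩
  have : IsArtinianRing (Algebra.adjoin K {h}) := .of_finite K _
  have isUnit_h' : IsUnit h' :=
    IsArtinianRing.isUnit_of_mem_nonZeroDivisors <|
      comap_nonZeroDivisors_le_of_injective (f := (Algebra.adjoin K {h}).subtype)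
        Subtype.val_injective hh.mem_nonZeroDivisors
  obtain ⟨s, hs⟩ := isSquare_of_isUnit_of_isSepClosed K isUnit_h'.unit⁻¹.isUnit
  obtain ⟨f, hf⟩ : ∃ f : K[X], aeval h f = s := by
    simpa only [Algebra.adjoin_singleton_eq_range_aeval, AlgHom.mem_range] using s.2
  have mul_sq : h' * s ^ 2 = 1 := by rw [sq, ← hs, isUnit_h'.mul_val_inv]
  exact ⟨f, hf ▸ congrArg Subtype.val mul_sq⟩

/-- Adjoining to `h` the scalar `1` in the algebra `E × K` controls the value of `f` at `1`. -/
theorem exists_eval_one_eq_one_and_mul_aeval_sq_eq_one (hh : IsUnit h) :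
    ∃ f : K[X], f.eval 1 = 1 ∧ h * aeval h f ^ 2 = 1 := by
  obtain ⟨f, hf⟩ := exists_mul_aeval_sq_eq_one (K := K) (h := (h, (1 : K)))
    (Prod.isUnit_iff.mpr ⟨hh, isUnit_one⟩)
  obtain ⟨mul_sq, eval_sq⟩ : h * aeval h f ^ 2 = 1 ∧ f.eval 1 ^ 2 = 1 := by
    simpa [aeval_prod_apply, Prod.ext_iff] using hf
  refine ⟨C (f.eval 1) * f, by simpa [sq] using eval_sq, ?_⟩
  rw [map_mul, aeval_C, (Algebra.commute_algebraMap_left _ _).mul_pow, ← map_pow, eval_sq, map_one,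
    one_mul, mul_sq]

end Squares

section Polynomial

variable {K : Type*} [CommSemiring K]

theorem semiconjBy_aeval {E : Type*} [Semiring E] [Algebra K E] {a x y : E}
    (h : SemiconjBy a x y) (f : K[X]) : SemiconjBy a (aeval x f) (aeval y f) := by
  induction f using Polynomial.induction_on' with
  | add f g hf hg => simpa using hf.add_right hg
  | monomial k c =>
    have hc : SemiconjBy a (algebraMap K E c) (algebraMap K E c) :=
      Algebra.commute_algebraMap_right c a
    simpa only [aeval_monomial] using hc.mul_right (h.pow_right k)

variable {ι : Type*} [Fintype ι] [DecidableEq ι]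

theorem aeval_transpose (M : Matrix ι ι K) (f : K[X]) : aeval Mᵀ f = (aeval M f)ᵀ := by
  have := aeval_algHom_apply (transposeAlgEquiv ι K K) M f
  simpa [aeval_op_apply] using this

theorem aeval_mulVec {M : Matrix ι ι K} {x : ι → K} {μ : K} (h : M *ᵥ x = μ • x) (f : K[X]) :
    aeval M f *ᵥ x = f.eval μ • x := by
  have pow_mulVec (k : ℕ) : M ^ k *ᵥ x = μ ^ k • x := by
    induction k with
    | zero => simp
    | succ k ih => rw [pow_succ, ← mulVec_mulVec, h, mulVec_smul, ih, smul_smul, pow_succ']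
  induction f using Polynomial.induction_on' with
  | add f g hf hg => simp [add_mulVec, add_smul, hf, hg]
  | monomial k c =>
    simp [aeval_monomial, ← Algebra.smul_def, smul_mulVec, pow_mulVec, smul_smul]

end Polynomial

theorem mul_mul_eq_mul_mul_of_semiconjBy {S : Type*} [Semigroup S] {a b q r A A' : S}
    (h : a * A = A' * b) (hq : SemiconjBy A r q) : a * q * A = A' * (b * r) := by
  rw [mul_assoc, ← hq.eq, ← mul_assoc, h, mul_assoc]

section Matrix

theorem fromBlocks_diagonal_mulVec_eq_iff {R m n : Type*} [NonUnitalNonAssocSemiring R]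
    [Fintype m] [Fintype n] {a : Matrix m m R} {b : Matrix n n R} {u u' : m ⊕ n → R} :
    fromBlocks a 0 0 b *ᵥ u = u' ↔
      a *ᵥ (u ∘ Sum.inl) = u' ∘ Sum.inl ∧ b *ᵥ (u ∘ Sum.inr) = u' ∘ Sum.inr := by
  simp [fromBlocks_mulVec, funext_iff, Sum.forall]

variable {ι : Type*} [Fintype ι]

theorem semiconjBy_transpose_mul {R : Type*} [NonUnitalCommSemiring R] {a b A A' : Matrix ι ι R}
    (hA : A.IsSymm) (hA' : A'.IsSymm) (h : a * A = A' * b) : SemiconjBy A (bᵀ * a)ᵀ (bᵀ * a) := by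
  have h_transpose : A * aᵀ = bᵀ * A' := by
    simpa only [transpose_mul, hA.eq, hA'.eq] using congrArg transpose h
  calc A * (bᵀ * a)ᵀ = A * aᵀ * b := by rw [transpose_mul, transpose_transpose, mul_assoc]
    _ = bᵀ * a * A := by rw [h_transpose, mul_assoc, ← h, mul_assoc]

variable [DecidableEq ι]

theorem mul_transpose_mul_transpose_eq_one {R : Type*} [CommSemiring R] {a b q : Matrix ι ι R}
    (h : bᵀ * a * q ^ 2 = 1) : b * qᵀ * (a * q)ᵀ = 1 := by
  have q_right_inv : bᵀ * a * q * q = 1 := by rw [mul_assoc, ← sq, h]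
  have left_inv : q * bᵀ * (a * q) = 1 := by
    simpa only [mul_assoc] using mul_eq_one_comm.mp q_right_inv
  simpa only [transpose_mul, transpose_transpose, transpose_one, mul_assoc] using
    congrArg transpose (mul_eq_one_comm.mp left_inv)

section CommRing

variable {R : Type*} [CommRing R] {b : Matrix ι ι R}

theorem mul_inv_eq_iff_eq_mul {m : Type*} {a c : Matrix m ι R} (hb : IsUnit b) :
    a * b⁻¹ = c ↔ a = c * b := by
  have := hb.invertible
  exact mul_inv_eq_iff_eq_mul_of_invertible b a c

theorem mul_mulVec_eq_self {a : Matrix ι ι R} {x : ι → R} (hb : IsUnit b)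
    (h : b⁻¹ *ᵥ x = a *ᵥ x) : (b * a) *ᵥ x = x := by
  rw [← mulVec_mulVec, ← h, mulVec_mulVec, mul_nonsing_inv _ ((isUnit_iff_isUnit_det b).mp hb),
    one_mulVec]

end CommRing

theorem exists_mul_sq_eq_one_of_stabilizes {K : Type*} [Field K] [IsSepClosed K] [NeZero (2 : K)]
    {p A B : Matrix ι ι K} {x y : ι → K} (hp : IsUnit p) (hA : SemiconjBy A pᵀ p)
    (hB : SemiconjBy B p pᵀ) (hx : p *ᵥ x = x) (hy : pᵀ *ᵥ y = y) :
    ∃ q : Matrix ι ι K, p * q ^ 2 = 1 ∧ SemiconjBy A qᵀ q ∧ SemiconjBy B q qᵀ ∧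
      q *ᵥ x = x ∧ qᵀ *ᵥ y = y := by
  obtain ⟨f, f_one, mul_sq⟩ := exists_eval_one_eq_one_and_mul_aeval_sq_eq_one (K := K) hp
  have aeval_fixes {M : Matrix ι ι K} {v : ι → K} (hv : M *ᵥ v = v) : aeval M f *ᵥ v = v := by
    simpa only [f_one, one_smul] using aeval_mulVec (μ := 1) (by rwa [one_smul]) f
  refine ⟨aeval p f, mul_sq, ?_⟩
  rw [← aeval_transpose]
  exact ⟨semiconjBy_aeval hA f, semiconjBy_aeval hB f, aeval_fixes hx, aeval_fixes hy⟩

end Matrix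

end EnhancedTheta

open EnhancedTheta in
theorem orbit_embedding_enhanced_theta_rep_typeCI_general {K ι : Type*} [Field K] [IsSepClosed K]
    [NeZero (2 : K)] [Fintype ι] [DecidableEq ι] (u u' : ι ⊕ ι → K) (A B A' B' : Matrix ι ι K)
    (hA : Aᵀ = A) (hB : Bᵀ = B) (hA' : A'ᵀ = A') (hB' : B'ᵀ = B')
    (a b : Matrix ι ι K) (ha : IsUnit a) (hb : IsUnit b)
    (h1 : fromBlocks a 0 0 b *ᵥ u = u') (h2 : fromBlocks (bᵀ)⁻¹ 0 0 (aᵀ)⁻¹ *ᵥ u = u')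
    (h3 : a * A * b⁻¹ = A') (h4 : b * B * a⁻¹ = B') :
    ∃ c : Matrix ι ι K, IsUnit c ∧ fromBlocks c 0 0 (cᵀ)⁻¹ *ᵥ u = u' ∧
      c * A * cᵀ = A' ∧ (cᵀ)⁻¹ * B * c⁻¹ = B' := by
  have haT : IsUnit aᵀ := (isUnit_transpose a).mpr ha
  have hbT : IsUnit bᵀ := (isUnit_transpose b).mpr hb
  have haA : a * A = A' * b := (mul_inv_eq_iff_eq_mul hb).mp h3
  have hbB : b * B = B' * a := (mul_inv_eq_iff_eq_mul ha).mp h4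
  obtain ⟨hax, hby⟩ := fromBlocks_diagonal_mulVec_eq_iff.mp h1
  obtain ⟨hbx, hay⟩ := fromBlocks_diagonal_mulVec_eq_iff.mp h2
  have p_transpose : (bᵀ * a)ᵀ = aᵀ * b := by rw [transpose_mul, transpose_transpose]
  obtain ⟨q, mul_sq, qA, qB, qx, qy⟩ := exists_mul_sq_eq_one_of_stabilizes (hbT.mul ha)
    (semiconjBy_transpose_mul hA hA' haA)
    (by simpa only [p_transpose, transpose_mul, transpose_transpose] using
      semiconjBy_transpose_mul hB hB' hbB)
    (mul_mulVec_eq_self hbT (hbx.trans hax.symm))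
    (p_transpose ▸ mul_mulVec_eq_self haT (hay.trans hby.symm))
  have d_mul : b * qᵀ * (a * q)ᵀ = 1 := mul_transpose_mul_transpose_eq_one mul_sq
  have c_unit : IsUnit (a * q) := (isUnit_transpose _).mp (.of_mul_eq_one_right _ d_mul)
  have cA : a * q * A = A' * (b * qᵀ) := mul_mul_eq_mul_mul_of_semiconjBy haA qA
  have dB : b * qᵀ * B = B' * (a * q) := mul_mul_eq_mul_mul_of_semiconjBy hbB qB
  refine ⟨a * q, c_unit, ?_⟩
  rw [inv_eq_left_inv d_mul]
  refine ⟨fromBlocks_diagonal_mulVec_eq_iff.mpr ⟨?_, ?_⟩, ?_, (mul_inv_eq_iff_eq_mul c_unit).mpr dB⟩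
  · rw [← mulVec_mulVec, qx, hax]
  · rw [← mulVec_mulVec, qy, hby]
  · rw [cA, mul_assoc, d_mul, mul_one]

/-- Orbit embedding
`(ℂ^{2n} ⊕ Sym_n(ℂ) ⊕ Sym_n(ℂ))/GL_n(ℂ) ↪
 (ℂ^{2n} ⊕ (ℂ^{2n})* ⊕ M_n(ℂ) ⊕ M_n(ℂ))/(GL_n(ℂ) × GL_n(ℂ))`:
for symmetric `A, B, A′, B′ ∈ M_n(ℂ)` and `u, u′ ∈ ℂ^{2n}`, if `a, b ∈ GL_n(ℂ)`
satisfy `diag(a,b) u = u′`, `diag((bᵀ)⁻¹, (aᵀ)⁻¹) u = u′`, `a A b⁻¹ = A′` and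
`b B a⁻¹ = B′`, then there exists `c ∈ GL_n(ℂ)` with `diag(c, (cᵀ)⁻¹) u = u′`,
`c A cᵀ = A′` and `(cᵀ)⁻¹ B c⁻¹ = B′`. -/
theorem orbit_embedding_enhanced_theta_rep_typeCI (n : ℕ) (hn : 1 ≤ n)
    (u u' : (Fin n ⊕ Fin n) → ℂ)
    (A B A' B' : Matrix (Fin n) (Fin n) ℂ)
    (hA : Aᵀ = A) (hB : Bᵀ = B) (hA' : A'ᵀ = A') (hB' : B'ᵀ = B')
    (a b : Matrix (Fin n) (Fin n) ℂ) (ha : IsUnit a) (hb : IsUnit b)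
    (h1 : Matrix.fromBlocks a 0 0 b *ᵥ u = u')
    (h2 : Matrix.fromBlocks (bᵀ)⁻¹ 0 0 (aᵀ)⁻¹ *ᵥ u = u')
    (h3 : a * A * b⁻¹ = A') (h4 : b * B * a⁻¹ = B') :
    ∃ c : Matrix (Fin n) (Fin n) ℂ, IsUnit c ∧
      Matrix.fromBlocks c 0 0 (cᵀ)⁻¹ *ᵥ u = u' ∧
      c * A * cᵀ = A' ∧ (cᵀ)⁻¹ * B * c⁻¹ = B' :=
  orbit_embedding_enhanced_theta_rep_typeCI_general u u' A B A' B' hA hB hA' hB' a b ha hb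
    h1 h2 h3 h4
end

section
/- Let w, w′ ∈ ℂ^{n} and let A, B, A′, B′ ∈ M_n(ℂ) be symmetric matrices (Aᵀ = A, Bᵀ = B, A′ᵀ = A′, B′ᵀ = B′). Suppose there exist a, b ∈ GL_n(ℂ) such that a w = w′, (bᵀ)⁻¹ w = w′, a A b⁻¹ = A′ and b B a⁻¹ = B′. Then there exists c ∈ GL_n(ℂ) such that c w = w′, c A cᵀ = A′ and (cᵀ)⁻¹ B c⁻¹ = B′. This realizes the orbit embedding (ℂⁿ ⊕ Sym_n(ℂ) ⊕ Sym_n(ℂ))/GL_n(ℂ) ↪ (ℂⁿ ⊕ (ℂⁿ)* ⊕ M_n(ℂ) ⊕ M_n(ℂ))/(GL_n(ℂ) × GL_n(ℂ)). -/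
open Matrix

/-!
Let `d = (bᵀ)⁻¹`. Transposing the hypotheses shows that `(a, d)` and `(d, a)` carry `(w, A, B)` to
the same point, so `g = d⁻¹ a` fixes `w` and satisfies `g A = A gᵀ` and `gᵀ B = B g`. An invertible
matrix over an algebraically closed field of characteristic different from `2` has a square root
`h` which is a polynomial in `g`; hence `h` satisfies the same commutation relations, and
`(d h) A (d h)ᵀ = d h² A dᵀ = a A dᵀ`. The square root can be chosen to fix `w` as well, by
prescribing the value `1` of the polynomial at `1`. Thus `c = d h`.
-/

section PolynomialSquareRoot

open Polynomial

variable {K : Type*} [Field K] [IsAlgClosed K] [NeZero (2 : K)]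

lemma exists_X_sub_C_mul_dvd_sq_sub {f p q : K[X]} {l : K} (hf : f.eval l ≠ 0)
    (hq : q ∣ p ^ 2 - f) : ∃ p' : K[X], (X - C l) * q ∣ p' ^ 2 - f := by
  obtain ⟨s, hs⟩ := hq
  have hs_eval : p.eval l ^ 2 - f.eval l = q.eval l * s.eval l := by
    simpa using congrArg (eval l) hs
  -- `(p + r q)² - f = q (s + 2 p r + q r²)`: choose `r` so that the second factor vanishes at `l`.
  have h_root : ∃ r : K, s.eval l + 2 * p.eval l * r + q.eval l * r ^ 2 = 0 := by
    by_cases hql : q.eval l = 0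
    · have hpl : p.eval l ≠ 0 := by
        intro h
        exact hf (by simpa [hql, h] using hs_eval)
      refine ⟨-s.eval l / (2 * p.eval l), ?_⟩
      rw [hql]
      field_simp
      ring
    · obtain ⟨t, ht⟩ := IsAlgClosed.exists_pow_nat_eq (f.eval l) two_pos
      refine ⟨(t - p.eval l) / q.eval l, ?_⟩
      field_simp
      linear_combination ht - hs_eval
  obtain ⟨r, hr⟩ := h_root
  obtain ⟨u, hu⟩ : X - C l ∣ s + 2 * p * C r + q * C r ^ 2 :=
    dvd_iff_isRoot.mpr (by simpa [IsRoot] using hr)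
  exact ⟨p + q * C r, u, by linear_combination hs + q * hu⟩

lemma exists_dvd_sq_sub {f q : K[X]} (hq : q.Monic) (hf : ∀ l, q.IsRoot l → ¬ f.IsRoot l) :
    ∃ p : K[X], q ∣ p ^ 2 - f := by
  suffices h : ∀ S : Multiset K, (∀ l ∈ S, f.eval l ≠ 0) →
      ∃ p : K[X], (S.map fun l => X - C l).prod ∣ p ^ 2 - f by
    rw [(IsAlgClosed.splits q).eq_prod_roots_of_monic hq]
    exact h q.roots fun l hl => hf l (isRoot_of_mem_roots hl)
  intro S
  induction S using Multiset.induction_on with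
  | empty => simp
  | cons l S ih =>
    intro hS
    obtain ⟨p, hp⟩ := ih fun m hm => hS m (Multiset.mem_cons_of_mem hm)
    rw [Multiset.map_cons, Multiset.prod_cons]
    exact exists_X_sub_C_mul_dvd_sq_sub (hS l (Multiset.mem_cons_self l S)) hp

end PolynomialSquareRoot

section PolynomialsInAMatrix

open Polynomial

lemma semiconjBy_aeval {R A : Type*} [CommSemiring R] [Semiring A] [Algebra R A] {m x y : A}
    (h : SemiconjBy m x y) (p : R[X]) : SemiconjBy m (aeval x p) (aeval y p) := by
  induction p using Polynomial.induction_on' with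
  | add p q hp hq => simpa only [map_add] using hp.add_right hq
  | monomial k r =>
    rw [aeval_monomial, aeval_monomial]
    exact SemiconjBy.mul_right (Algebra.commutes r m).symm (h.pow_right k)

variable {ι : Type*} [Fintype ι] [DecidableEq ι]

lemma transpose_aeval {R : Type*} [CommSemiring R] (g : Matrix ι ι R) (p : R[X]) :
    (aeval g p)ᵀ = aeval gᵀ p := by
  have h := aeval_algHom_apply (transposeAlgEquiv ι R R) g p
  rw [transposeAlgEquiv_apply, transposeAlgEquiv_apply, aeval_op_apply] at h
  exact (MulOpposite.op_injective h).symm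

lemma aeval_mulVec_of_mulVec_eq_smul_s8 {R : Type*} [CommRing R] {g : Matrix ι ι R} {w : ι → R}
    {μ : R} (h : g *ᵥ w = μ • w) (p : R[X]) : aeval g p *ᵥ w = p.eval μ • w := by
  have h_lin : toLinAlgEquiv' g w = μ • w := by rwa [toLinAlgEquiv'_apply]
  simpa only [aeval_algHom_apply, toLinAlgEquiv'_apply] using
    Module.End.aeval_apply_of_mem_apply_eq_smul (p := p) h_lin

lemma exists_aeval_sq_eq_and_eval_one_eq_one {K : Type*} [Field K] [IsAlgClosed K]
    [NeZero (2 : K)] {g : Matrix ι ι K} (hg : IsUnit g) :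
    ∃ p : K[X], aeval g p ^ 2 = g ∧ p.eval 1 = 1 := by
  -- The factor `X - 1` forces `p.eval 1 = ±1` even when `1` is not an eigenvalue of `g`.
  obtain ⟨p, hp⟩ : ∃ p : K[X], (X - C 1) * g.charpoly ∣ p ^ 2 - X := by
    refine exists_dvd_sq_sub ((monic_X_sub_C 1).mul g.charpoly_monic) ?_
    intro l hl hl0
    obtain rfl : l = 0 := by simpa using hl0
    have h_det : det (-g) = 0 := by simpa [IsRoot, eval_charpoly] using hl
    exact ((isUnit_iff_isUnit_det _).mp hg.neg).ne_zero h_det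
  have h_sq : aeval g p ^ 2 = g := by
    have := aeval_eq_zero_of_dvd_aeval_eq_zero ((dvd_mul_left _ _).trans hp) g.aeval_self_charpoly
    simpa [sub_eq_zero] using this
  have h_eval_sq : p.eval 1 ^ 2 = 1 := by
    have := dvd_iff_isRoot.mp ((dvd_mul_right _ _).trans hp)
    simpa [sub_eq_zero] using this
  rcases sq_eq_one_iff.mp h_eval_sq with h | h
  · exact ⟨p, h_sq, h⟩
  · exact ⟨-p, by simpa using h_sq, by simp [h]⟩

end PolynomialsInAMatrix

section Congruence

variable {ι K : Type*} [Fintype ι] [DecidableEq ι] [Field K] [IsAlgClosed K] [NeZero (2 : K)]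

lemma exists_congruence_of_semiconjBy_transpose {w : ι → K} {A B g : Matrix ι ι K} (hg : IsUnit g)
    (hw : g *ᵥ w = w) (hA : SemiconjBy A gᵀ g) (hB : SemiconjBy B g gᵀ) :
    ∃ h : Matrix ι ι K, IsUnit h ∧ h *ᵥ w = w ∧ h * A * hᵀ = g * A ∧ hᵀ * B * h = gᵀ * B := by
  obtain ⟨p, h_sq, hp⟩ := exists_aeval_sq_eq_and_eval_one_eq_one hg
  have hA' := semiconjBy_aeval hA p
  have hB' := semiconjBy_aeval hB p
  rw [← transpose_aeval] at hA' hB'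
  refine ⟨Polynomial.aeval g p, (isUnit_pow_iff two_ne_zero).mp (h_sq.symm ▸ hg), ?_, ?_, ?_⟩
  · simpa [hp] using aeval_mulVec_of_mulVec_eq_smul_s8 (μ := 1) (by simpa using hw) p
  · rw [mul_assoc, hA'.eq, ← mul_assoc, ← sq, h_sq]
  · rw [mul_assoc, hB'.eq, ← mul_assoc, ← sq, ← transpose_pow, h_sq]

lemma exists_congruence_of_mul_mul_transpose_comm {w : ι → K} {A B a d : Matrix ι ι K}
    (ha : IsUnit a) (hd : IsUnit d) (hw : a *ᵥ w = d *ᵥ w) (hA : a * A * dᵀ = d * A * aᵀ)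
    (hB : aᵀ * B * d = dᵀ * B * a) :
    ∃ c : Matrix ι ι K, IsUnit c ∧
      c *ᵥ w = a *ᵥ w ∧ c * A * cᵀ = a * A * dᵀ ∧ cᵀ * B * c = aᵀ * B * d := by
  obtain ⟨g, rfl⟩ : ∃ g, a = d * g := hd.dvd
  rw [transpose_mul] at hA hB
  have hg : IsUnit g := isUnit_of_mul_isUnit_right ha
  have hgw : g *ᵥ w = w := mulVec_injective_of_isUnit hd (by rwa [mulVec_mulVec])
  have hgA : SemiconjBy A gᵀ g := by
    refine hd.mul_left_cancel (((isUnit_transpose d).mpr hd).mul_right_cancel ?_)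
    simpa only [mul_assoc] using hA.symm
  have hgB : SemiconjBy (dᵀ * B * d) g gᵀ := by
    simpa only [SemiconjBy, mul_assoc] using hB.symm
  obtain ⟨h, hh, hhw, hhA, hhB⟩ := exists_congruence_of_semiconjBy_transpose hg hgw hgA hgB
  refine ⟨d * h, hd.mul hh, ?_, ?_, ?_⟩
  · rw [← mulVec_mulVec, ← mulVec_mulVec, hhw, hgw]
  · calc d * h * A * (d * h)ᵀ = d * (h * A * hᵀ) * dᵀ := by simp only [transpose_mul, mul_assoc]
      _ = d * g * A * dᵀ := by rw [hhA, mul_assoc d g]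
  · calc (d * h)ᵀ * B * (d * h) = hᵀ * (dᵀ * B * d) * h := by simp only [transpose_mul, mul_assoc]
      _ = (d * g)ᵀ * B * d := by rw [hhB]; simp only [transpose_mul, mul_assoc]

theorem orbit_embedding_enhanced_Kronecker_quiver_general {w w' : ι → K}
    {A B A' B' : Matrix ι ι K} (hA : Aᵀ = A) (hB : Bᵀ = B) (hA' : A'ᵀ = A') (hB' : B'ᵀ = B')
    {a b : Matrix ι ι K} (ha : IsUnit a) (hb : IsUnit b)
    (h1 : a *ᵥ w = w') (h2 : (bᵀ)⁻¹ *ᵥ w = w')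
    (h3 : a * A * b⁻¹ = A') (h4 : b * B * a⁻¹ = B') :
    ∃ c : Matrix ι ι K, IsUnit c ∧
      c *ᵥ w = w' ∧ c * A * cᵀ = A' ∧ (cᵀ)⁻¹ * B * c⁻¹ = B' := by
  have h_inv_transpose : ((bᵀ)⁻¹)ᵀ = b⁻¹ := by rw [transpose_nonsing_inv, transpose_transpose]
  have hd : IsUnit (bᵀ)⁻¹ := isUnit_nonsing_inv_iff.mpr ((isUnit_transpose b).mpr hb)
  have hB_eq : b⁻¹ * B' * a = B := by
    rw [isUnit_iff_isUnit_det] at ha hb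
    rw [← h4, mul_assoc, nonsing_inv_mul_cancel_right _ _ ha, nonsing_inv_mul_cancel_left _ _ hb]
  have hA_transpose : (bᵀ)⁻¹ * A * aᵀ = A' := by
    rw [← hA', ← h3]
    simp only [transpose_mul, transpose_nonsing_inv, hA, mul_assoc]
  have hB_transpose : aᵀ * B' * (bᵀ)⁻¹ = B := by
    rw [← hB, ← hB_eq]
    simp only [transpose_mul, transpose_nonsing_inv, hB', mul_assoc]
  obtain ⟨c, hc, hcw, hcA, hcB⟩ :=
    exists_congruence_of_mul_mul_transpose_comm ha hd (h1.trans h2.symm)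
      (by rw [h_inv_transpose, h3, hA_transpose]) (by rw [h_inv_transpose, hB_eq, hB_transpose])
  refine ⟨c, hc, hcw.trans h1, by rw [hcA, h_inv_transpose, h3], ?_⟩
  have hc_det := (isUnit_iff_isUnit_det c).mp hc
  have hcT_det := (isUnit_iff_isUnit_det cᵀ).mp ((isUnit_transpose c).mpr hc)
  rw [← hB_transpose, ← hcB, mul_assoc, mul_nonsing_inv_cancel_right _ _ hc_det,
    nonsing_inv_mul_cancel_left _ _ hcT_det]

end Congruence

/-- Orbit embedding
`(ℂⁿ ⊕ Sym_n(ℂ) ⊕ Sym_n(ℂ))/GL_n(ℂ) ↪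
 (ℂⁿ ⊕ (ℂⁿ)* ⊕ M_n(ℂ) ⊕ M_n(ℂ))/(GL_n(ℂ) × GL_n(ℂ))`:
for symmetric `A, B, A′, B′ ∈ M_n(ℂ)` and `w, w′ ∈ ℂⁿ`, if `a, b ∈ GL_n(ℂ)`
satisfy `a w = w′`, `(bᵀ)⁻¹ w = w′`, `a A b⁻¹ = A′` and `b B a⁻¹ = B′`, then
there exists `c ∈ GL_n(ℂ)` with `c w = w′`, `c A cᵀ = A′` and
`(cᵀ)⁻¹ B c⁻¹ = B′`. -/
theorem orbit_embedding_enhanced_Kronecker_quiver (n : ℕ) (hn : 1 ≤ n)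
    (w w' : Fin n → ℂ)
    (A B A' B' : Matrix (Fin n) (Fin n) ℂ)
    (hA : Aᵀ = A) (hB : Bᵀ = B) (hA' : A'ᵀ = A') (hB' : B'ᵀ = B')
    (a b : Matrix (Fin n) (Fin n) ℂ) (ha : IsUnit a) (hb : IsUnit b)
    (h1 : a *ᵥ w = w') (h2 : (bᵀ)⁻¹ *ᵥ w = w')
    (h3 : a * A * b⁻¹ = A') (h4 : b * B * a⁻¹ = B') :
    ∃ c : Matrix (Fin n) (Fin n) ℂ, IsUnit c ∧
      c *ᵥ w = w' ∧ c * A * cᵀ = A' ∧ (cᵀ)⁻¹ * B * c⁻¹ = B' :=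
  orbit_embedding_enhanced_Kronecker_quiver_general hA hB hA' hB' ha hb h1 h2 h3 h4
end

section
/- Every polynomial function F on ℂ^{2n} × ℂ^{2n} × M_{2n}(ℂ) (polynomial in the coordinates of v, the coordinates of ξ, and the entries of A) that satisfies F(g v, ξ g⁻¹, g A g⁻¹) = F(v, ξ, A) for all g ∈ GL_{2n}(ℂ) belongs to the ℂ-subalgebra of functions generated by the trace functions (v, ξ, A) ↦ tr(A^k) for k ≥ 1 together with the functions Γ_k(v, ξ, A) = ξ A^k v for k ≥ 0. -/
/-!
If `v, A v, …, A ^ (d - 1) v` is a basis of `V`, then rewriting `(v, ξ, A)` in this basis turns `v`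
into the first basis vector, `ξ` into the row of the `ξ A ^ k v`, and `A` into the companion matrix
of its characteristic polynomial. An invariant function takes the same value at `(v, ξ, A)` and at
this normal form, and a polynomial evaluated at the normal form is a polynomial in the `ξ A ^ k v`
and the coefficients of the characteristic polynomial. The triples admitting such a basis are the
nonvanishing locus of a nonzero polynomial, so the two functions agree everywhere. Newton's
identities then express the coefficients of the characteristic polynomial through the traces
`tr (A ^ k)`.
-/

open Matrix

/-- The space `V ⊕ V* ⊕ gl_{2n}(ℂ)` with `V = ℂ^{2n}` indexed by `Fin n ⊕ Fin n`:
a point is a triple (vector `v`, covector `ξ`, matrix `A`). -/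
abbrev EnhPt (n : ℕ) :=
  ((Fin n ⊕ Fin n) → ℂ) × ((Fin n ⊕ Fin n) → ℂ) ×
    Matrix (Fin n ⊕ Fin n) (Fin n ⊕ Fin n) ℂ

/-- The coordinate functions on `V ⊕ V* ⊕ gl_{2n}(ℂ)`: the coordinates of `v`,
the coordinates of `ξ`, and the entries of `A`.  Polynomial functions are the
elements of the ℂ-subalgebra they generate. -/
def coordFns (n : ℕ) : Set (EnhPt n → ℂ) :=
  {f | ∃ i, f = fun p => p.1 i} ∪ {f | ∃ i, f = fun p => p.2.1 i} ∪
    {f | ∃ i j, f = fun p => p.2.2 i j}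

/-- Generators of the invariants: the trace functions `tr(A^k)` for `k ≥ 1`
together with `Γ_k(v, ξ, A) = ξ A^k v` for `k ≥ 0`. -/
def invGens (n : ℕ) : Set (EnhPt n → ℂ) :=
  {f | ∃ k : ℕ, 1 ≤ k ∧ f = fun p => (p.2.2 ^ k).trace} ∪
    {f | ∃ k : ℕ, f = fun p => p.2.1 ⬝ᵥ ((p.2.2 ^ k) *ᵥ p.1)}

section NewtonIdentities

open Polynomial Filter

variable {m R : Type*} [Fintype m] [DecidableEq m] [CommRing R]

theorem derivative_det (M : Matrix m m R[X]) :
    derivative M.det = ∑ i, (M.updateRow i fun j ↦ derivative (M i j)).det := by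
  have det_rows (N : Matrix m m R[X]) :
      N.det = ∑ σ : Equiv.Perm m, Equiv.Perm.sign σ • ∏ i, N i (σ i) := by
    simp [← det_transpose N, det_apply]
  have prod_updateRow (σ : Equiv.Perm m) (i : m) :
      ∏ l, M.updateRow i (fun j ↦ derivative (M i j)) l (σ l) =
        (∏ l ∈ Finset.univ.erase i, M l (σ l)) * derivative (M i (σ i)) := by
    rw [← Finset.prod_erase_mul _ _ (Finset.mem_univ i), updateRow_self]
    congr 1
    exact Finset.prod_congr rfl fun l hl ↦ by rw [updateRow_ne (Finset.ne_of_mem_erase hl)]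
  simp only [det_rows M, derivative_sum, derivative_smul, derivative_prod_finset, Finset.smul_sum]
  rw [Finset.sum_comm]
  refine Finset.sum_congr rfl fun i _ ↦ ?_
  rw [det_rows]
  exact Finset.sum_congr rfl fun σ _ ↦ by rw [prod_updateRow]

theorem derivative_charpoly_eq_trace_adjugate (A : Matrix m m R) :
    derivative A.charpoly = A.charmatrix.adjugate.trace := by
  rw [charpoly, derivative_det, trace]
  refine Finset.sum_congr rfl fun i _ ↦ ?_
  rw [diag_apply, adjugate_apply]
  congr 2
  ext1 j
  obtain rfl | h := eq_or_ne i j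
  · simp
  · simp [h]

/-- The matrix over `R` that is the coefficient of `X ^ k` in `X * adjugate (X - A)`. The factor `X`
makes the recurrence in `k` and the formula for the trace uniform in `k`, including `k = 0`. -/
noncomputable def adjugateCoeff (A : Matrix m m R) (k : ℕ) : Matrix m m R :=
  A.charmatrix.adjugate.map fun q ↦ (X * q).coeff k

theorem adjugateCoeff_eq_add_mul (A : Matrix m m R) (k : ℕ) :
    adjugateCoeff A k = A.charpoly.coeff k • 1 + A * adjugateCoeff A (k + 1) := by
  have X_smul_adjugate : (X : R[X]) • A.charmatrix.adjugate =
      A.charpoly • 1 + A.map C * A.charmatrix.adjugate := by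
    rw [charpoly, ← mul_adjugate, charmatrix, sub_mul]
    simp [← smul_one_eq_diagonal]
  ext i j
  have hij := congr(($X_smul_adjugate i j).coeff k)
  simp only [Matrix.add_apply, Matrix.smul_apply, smul_eq_mul, coeff_add, Matrix.mul_apply,
    Matrix.map_apply, finsetSum_coeff, coeff_C_mul] at hij
  obtain rfl | hne := eq_or_ne i j
  · simp [adjugateCoeff, hij, Matrix.mul_apply]
  · simp [adjugateCoeff, hij, hne, Matrix.mul_apply]

theorem adjugateCoeff_eq_sum_add (A : Matrix m m R) (k r : ℕ) :
    adjugateCoeff A k = ∑ j ∈ Finset.range r, A.charpoly.coeff (k + j) • A ^ j +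
      A ^ r * adjugateCoeff A (k + r) := by
  induction r with
  | zero => simp
  | succ r ih =>
    rw [ih, adjugateCoeff_eq_add_mul A (k + r), Finset.sum_range_succ, mul_add, mul_smul_comm,
      mul_one, ← mul_assoc, ← pow_succ, add_assoc, add_assoc]

theorem eventually_adjugateCoeff_eq_zero (A : Matrix m m R) :
    ∀ᶠ k in atTop, adjugateCoeff A k = 0 := by
  simp only [← Matrix.ext_iff, eventually_all]
  intro i j
  filter_upwards [eventually_gt_atTop (X * A.charmatrix.adjugate i j).natDegree] with k hk
  exact coeff_eq_zero_of_natDegree_lt hk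

theorem trace_adjugateCoeff (A : Matrix m m R) (k : ℕ) :
    (adjugateCoeff A k).trace = k * A.charpoly.coeff k := by
  have trace_eq : (adjugateCoeff A k).trace = (X * derivative A.charpoly).coeff k := by
    rw [derivative_charpoly_eq_trace_adjugate]
    simp [adjugateCoeff, trace, Finset.mul_sum]
  rw [trace_eq]
  cases k <;> simp [coeff_derivative, mul_comm]

theorem natCast_mul_coeff_charpoly (A : Matrix m m R) (k : ℕ) :
    k * A.charpoly.coeff k =
      ∑ j ∈ Finset.range (Fintype.card m + 1), A.charpoly.coeff (k + j) * (A ^ j).trace := by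
  nontriviality R
  obtain ⟨r, hr, hmr⟩ := (((tendsto_add_atTop_nat k).eventually
    (eventually_adjugateCoeff_eq_zero A)).and (eventually_gt_atTop (Fintype.card m))).exists
  have sum_range_r :
      k * A.charpoly.coeff k =
        ∑ j ∈ Finset.range r, A.charpoly.coeff (k + j) * (A ^ j).trace := by
    rw [← trace_adjugateCoeff, adjugateCoeff_eq_sum_add A k r, add_comm k r, hr, mul_zero,
      add_zero, trace_sum]
    simp_rw [trace_smul, smul_eq_mul]
  rw [sum_range_r]
  refine (Finset.sum_subset (Finset.range_mono hmr) fun j _ hj ↦ ?_).symm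
  rw [coeff_eq_zero_of_natDegree_lt, zero_mul]
  rw [charpoly_natDegree_eq_dim]
  simp only [Finset.mem_range, not_lt] at hj
  omega

theorem natCast_sub_card_mul_coeff_charpoly (A : Matrix m m R) (k : ℕ) :
    ((k : R) - Fintype.card m) * A.charpoly.coeff k =
      ∑ j ∈ Finset.range (Fintype.card m),
        A.charpoly.coeff (k + (j + 1)) * (A ^ (j + 1)).trace := by
  rw [sub_mul, natCast_mul_coeff_charpoly, Finset.sum_range_succ']
  simp [mul_comm]

end NewtonIdentities

section FunctionSubalgebra

variable {m X K : Type*} [Fintype m]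

theorem fun_sum_mem [CommSemiring K] (S : Subalgebra K (X → K)) {α : Type*} {s : Finset α}
    {f : α → X → K} (h : ∀ a ∈ s, f a ∈ S) : (fun x ↦ ∑ a ∈ s, f a x) ∈ S := by
  simpa only [← Finset.sum_apply] using S.sum_mem h

theorem fun_mulVec_mem [CommSemiring K] {S : Subalgebra K (X → K)} {M : X → Matrix m m K}
    {v : X → m → K}
    (hM : ∀ i j, (fun x ↦ M x i j) ∈ S) (hv : ∀ i, (fun x ↦ v x i) ∈ S) (i : m) :
    (fun x ↦ (M x *ᵥ v x) i) ∈ S :=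
  fun_sum_mem S fun j _ ↦ S.mul_mem (hM i j) (hv j)

variable [DecidableEq m]

theorem fun_pow_mulVec_mem [CommSemiring K] {S : Subalgebra K (X → K)}
    {M : X → Matrix m m K} {v : X → m → K}
    (hM : ∀ i j, (fun x ↦ M x i j) ∈ S) (hv : ∀ i, (fun x ↦ v x i) ∈ S) (k : ℕ) (i : m) :
    (fun x ↦ (M x ^ k *ᵥ v x) i) ∈ S := by
  induction k generalizing i with
  | zero => simpa using hv i
  | succ k ih =>
    simp_rw [pow_succ', ← mulVec_mulVec]
    exact fun_mulVec_mem hM ih i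

theorem fun_charpoly_coeff_mem_of_trace_pow_mem [Field K] [CharZero K] {S : Subalgebra K (X → K)}
    {A : X → Matrix m m K} (htrace : ∀ k, 1 ≤ k → (fun x ↦ (A x ^ k).trace) ∈ S) (k : ℕ) :
    (fun x ↦ (A x).charpoly.coeff k) ∈ S := by
  obtain hlt | rfl | hgt := lt_trichotomy k (Fintype.card m)
  · have hne : (k : K) - Fintype.card m ≠ 0 := sub_ne_zero.mpr (by exact_mod_cast hlt.ne)
    have coeff_eq : (fun x ↦ (A x).charpoly.coeff k) = ((k : K) - Fintype.card m)⁻¹ • fun x ↦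
        ∑ j ∈ Finset.range (Fintype.card m),
          (A x).charpoly.coeff (k + (j + 1)) * (A x ^ (j + 1)).trace := by
      funext x
      rw [Pi.smul_apply, ← natCast_sub_card_mul_coeff_charpoly, smul_eq_mul,
        inv_mul_cancel_left₀ hne]
    rw [coeff_eq]
    exact S.smul_mem (fun_sum_mem S fun j _ ↦ S.mul_mem
      (fun_charpoly_coeff_mem_of_trace_pow_mem htrace (k + (j + 1))) (htrace _ j.succ_pos)) _
  · have coeff_eq : (fun x ↦ (A x).charpoly.coeff (Fintype.card m)) = 1 := by
      funext x
      exact (congrArg _ (A x).charpoly_natDegree_eq_dim).symm.trans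
        (A x).charpoly_monic.coeff_natDegree
    exact coeff_eq ▸ S.one_mem
  · have coeff_eq : (fun x ↦ (A x).charpoly.coeff k) = 0 := by
      funext x
      exact Polynomial.coeff_eq_zero_of_natDegree_lt
        ((A x).charpoly_natDegree_eq_dim.trans_lt hgt)
    exact coeff_eq ▸ S.zero_mem
termination_by Fintype.card m - k

variable [CommRing K]

theorem fun_det_mem {S : Subalgebra K (X → K)} {M : X → Matrix m m K}
    (h : ∀ i j, (fun x ↦ M x i j) ∈ S) : (fun x ↦ (M x).det) ∈ S := by
  let N : Matrix m m S := of fun i j ↦ ⟨fun x ↦ M x i j, h i j⟩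
  have det_eq : (N.det : X → K) = fun x ↦ (M x).det :=
    funext fun x ↦ ((Pi.evalRingHom _ x).comp S.toSubring.subtype).map_det N
  exact det_eq ▸ Subtype.property _

theorem fun_charpoly_coeff_mem {S : Subalgebra K (X → K)} {M : X → Matrix m m K}
    (h : ∀ i j, (fun x ↦ M x i j) ∈ S) (k : ℕ) : (fun x ↦ (M x).charpoly.coeff k) ∈ S := by
  let N : Matrix m m S := of fun i j ↦ ⟨fun x ↦ M x i j, h i j⟩
  have coeff_eq : (N.charpoly.coeff k : X → K) = fun x ↦ (M x).charpoly.coeff k := by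
    funext x
    let evalAt : S →+* K := (Pi.evalRingHom _ x).comp S.toSubring.subtype
    change evalAt (N.charpoly.coeff k) = _
    rw [← Polynomial.coeff_map, ← charpoly_map]
    rfl
  exact coeff_eq ▸ Subtype.property _

end FunctionSubalgebra

section PolynomialOnLines

open Polynomial

variable {K E : Type*}

variable (K E) in
/-- The algebra of functions on a module whose restriction to every line is a polynomial in the
parameter of the line. -/
def polynomialOnLines [CommSemiring K] [AddCommMonoid E] [Module K E] : Subalgebra K (E → K) where
  carrier := {f | ∀ x y : E, ∃ P : K[X], ∀ t : K, f (x + t • y) = P.eval t}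
  mul_mem' := fun hf hg x y ↦ by
    obtain ⟨P, hP⟩ := hf x y
    obtain ⟨Q, hQ⟩ := hg x y
    exact ⟨P * Q, fun t ↦ by simp [hP, hQ]⟩
  add_mem' := fun hf hg x y ↦ by
    obtain ⟨P, hP⟩ := hf x y
    obtain ⟨Q, hQ⟩ := hg x y
    exact ⟨P + Q, fun t ↦ by simp [hP, hQ]⟩
  algebraMap_mem' := fun c _ _ ↦ ⟨C c, fun t ↦ by simp⟩

theorem linearMap_mem_polynomialOnLines [CommSemiring K] [AddCommMonoid E] [Module K E]
    (φ : E →ₗ[K] K) : ⇑φ ∈ polynomialOnLines K E :=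
  fun x y ↦ ⟨C (φ x) + C (φ y) * X, fun t ↦ by simp [mul_comm t]⟩

theorem eq_zero_or_eq_zero_of_mul_eq_zero_of_mem_polynomialOnLines [CommRing K] [IsDomain K]
    [Infinite K] [AddCommGroup E] [Module K E] {f g : E → K} (hf : f ∈ polynomialOnLines K E)
    (hg : g ∈ polynomialOnLines K E) (h : f * g = 0) : f = 0 ∨ g = 0 := by
  by_contra! hfg
  obtain ⟨x, hx⟩ := Function.ne_iff.mp hfg.1
  obtain ⟨y, hy⟩ := Function.ne_iff.mp hfg.2
  obtain ⟨P, hP⟩ := hf x (y - x)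
  obtain ⟨Q, hQ⟩ := hg x (y - x)
  have hPQ : P * Q = 0 := Polynomial.funext fun t ↦ by
    simpa [← hP, ← hQ] using congrFun h (x + t • (y - x))
  obtain rfl | rfl := mul_eq_zero.mp hPQ
  · exact hx (by simpa using hP 0)
  · exact hy (by simpa using hQ 1)

end PolynomialOnLines

section CompanionMatrix

open Polynomial

variable {ι R : Type*} [Fintype ι] [DecidableEq ι] [CommRing R]

/-- The Krylov matrix of `A` and `v`, with columns `v, A v, …, A ^ (d - 1) v`. -/
def krylovMatrix (A : Matrix ι ι R) (v : ι → R) (d : ℕ) : Matrix ι (Fin d) R :=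
  of fun i j ↦ (A ^ (j : ℕ) *ᵥ v) i

/-- The companion matrix of a polynomial `q`, meant for `q` monic of degree `d`: it is the matrix of
multiplication by `X` in the basis `1, X, …, X ^ (d - 1)` of `R[X] / (q)`. -/
def companionMatrix (q : R[X]) (d : ℕ) : Matrix (Fin d) (Fin d) R :=
  of fun i j ↦ if h : (j : ℕ) + 1 < d then (Pi.single ⟨j + 1, h⟩ 1 : Fin d → R) i else -q.coeff i

theorem pow_natDegree_eq_neg_sum_of_aeval_eq_zero {B : Type*} [Ring B] [Algebra R B] {q : R[X]}
    (hq : q.Monic) {a : B} (ha : aeval a q = 0) :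
    a ^ q.natDegree = -∑ i : Fin q.natDegree, q.coeff i • a ^ (i : ℕ) := by
  rw [aeval_eq_sum_range, Finset.sum_range_succ, hq.coeff_natDegree, one_smul] at ha
  rw [Fin.sum_univ_eq_sum_range fun i ↦ q.coeff i • a ^ i]
  exact eq_neg_of_add_eq_zero_right ha

theorem krylovMatrix_mul_companionMatrix {q : R[X]} (hq : q.Monic) {A : Matrix ι ι R}
    (hA : aeval A q = 0) (v : ι → R) :
    krylovMatrix A v q.natDegree * companionMatrix q q.natDegree =
      A * krylovMatrix A v q.natDegree := by
  ext i j
  have mul_krylov : (A * krylovMatrix A v q.natDegree) i j = (A ^ ((j : ℕ) + 1) *ᵥ v) i := by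
    rw [pow_succ', ← mulVec_mulVec]
    rfl
  rw [mul_krylov, Matrix.mul_apply]
  by_cases hj : (j : ℕ) + 1 < q.natDegree
  · simp [krylovMatrix, companionMatrix, hj, Pi.single_apply]
  · rw [show (j : ℕ) + 1 = q.natDegree by omega, pow_natDegree_eq_neg_sum_of_aeval_eq_zero hq hA]
    simp [krylovMatrix, companionMatrix, hj, neg_mulVec, sum_mulVec, smul_mulVec, mul_comm]

theorem krylovMatrix_diagonal_one {d : ℕ} (a : ι → R) :
    krylovMatrix (diagonal a) 1 d = of fun i (j : Fin d) ↦ a i ^ (j : ℕ) := by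
  ext i j
  simp [krylovMatrix, diagonal_pow, mulVec_diagonal]

end CompanionMatrix

/-- The space `V ⊕ V* ⊕ gl(V)` for `V = K ^ ι`, as triples `(v, ξ, A)`. -/
abbrev EnhancedSpace (K ι : Type*) := (ι → K) × (ι → K) × Matrix ι ι K

/-- The coordinate functions on `V ⊕ V* ⊕ gl(V)`, which generate the algebra of polynomial
functions. -/
def coordinates (K ι : Type*) : Set (EnhancedSpace K ι → K) :=
  {f | ∃ i, f = fun p ↦ p.1 i} ∪ {f | ∃ i, f = fun p ↦ p.2.1 i} ∪
    {f | ∃ i j, f = fun p ↦ p.2.2 i j}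

/-- The invariants `tr (A ^ k)`, for `k ≥ 1`, and `ξ A ^ k v`, for `k ≥ 0`. -/
def invariantGenerators (K ι : Type*) [CommSemiring K] [Fintype ι] [DecidableEq ι] :
    Set (EnhancedSpace K ι → K) :=
  {f | ∃ k : ℕ, 1 ≤ k ∧ f = fun p ↦ (p.2.2 ^ k).trace} ∪
    {f | ∃ k : ℕ, f = fun p ↦ p.2.1 ⬝ᵥ (p.2.2 ^ k *ᵥ p.1)}

theorem adjoin_coordinates_le_polynomialOnLines (K ι : Type*) [CommSemiring K] :
    Algebra.adjoin K (coordinates K ι) ≤ polynomialOnLines K (EnhancedSpace K ι) := by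
  refine Algebra.adjoin_le ?_
  rintro f ((⟨i, rfl⟩ | ⟨i, rfl⟩) | ⟨i, j, rfl⟩)
  · exact linearMap_mem_polynomialOnLines
      (LinearMap.proj (φ := fun _ ↦ K) i ∘ₗ LinearMap.fst K _ _)
  · exact linearMap_mem_polynomialOnLines
      (LinearMap.proj (φ := fun _ ↦ K) i ∘ₗ LinearMap.fst K _ _ ∘ₗ LinearMap.snd K _ _)
  · exact linearMap_mem_polynomialOnLines
      (Matrix.entryLinearMap K K i j ∘ₗ LinearMap.snd K _ _ ∘ₗ LinearMap.snd K _ _)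

theorem matrix_entry_mem_adjoin_coordinates {K ι : Type*} [CommSemiring K] (i j : ι) :
    (fun p : EnhancedSpace K ι ↦ p.2.2 i j) ∈ Algebra.adjoin K (coordinates K ι) :=
  Algebra.subset_adjoin (Or.inr ⟨i, j, rfl⟩)

theorem pow_mulVec_mem_adjoin_coordinates {K ι : Type*} [CommSemiring K] [Fintype ι]
    [DecidableEq ι] (k : ℕ) (i : ι) :
    (fun p : EnhancedSpace K ι ↦ (p.2.2 ^ k *ᵥ p.1) i) ∈ Algebra.adjoin K (coordinates K ι) :=
  fun_pow_mulVec_mem matrix_entry_mem_adjoin_coordinates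
    (fun i ↦ Algebra.subset_adjoin (Or.inl (Or.inl ⟨i, rfl⟩))) k i

section NormalForm

variable {ι K : Type*} [Fintype ι] [DecidableEq ι] [CommRing K] {d : ℕ} (e : ι ≃ Fin d)

/-- The Krylov matrix of `A` and `v` at a triple `(v, ξ, A)`, made square by the enumeration `e` of
the indices. When invertible, it carries the normal form of the triple to the triple itself. -/
def krylovFrame (p : EnhancedSpace K ι) : Matrix ι ι K :=
  (krylovMatrix p.2.2 p.1 d).submatrix id e

/-- The triple `(v, ξ, A)` written in the basis `v, A v, …, A ^ (d - 1) v`: the first basis vector,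
the row of the `ξ A ^ k v`, and the companion matrix of the characteristic polynomial of `A`. The
formula makes sense for every triple, whether or not these vectors form a basis. -/
noncomputable def normalForm (p : EnhancedSpace K ι) : EnhancedSpace K ι :=
  (fun i ↦ if (e i : ℕ) = 0 then 1 else 0, p.2.1 ᵥ* krylovFrame e p,
    (companionMatrix p.2.2.charpoly d).submatrix e e)

theorem krylovFrame_mulVec_normalForm (p : EnhancedSpace K ι) :
    krylovFrame e p *ᵥ (normalForm e p).1 = p.1 := by
  funext i
  let i₀ := e.symm ⟨0, (Nat.zero_le _).trans_lt (e i).isLt⟩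
  have first_basis_vector : (normalForm e p).1 = Pi.single i₀ 1 := by
    funext j
    simp [normalForm, i₀, Pi.single_apply, Equiv.eq_symm_apply, Fin.ext_iff]
  rw [first_basis_vector, mulVec_single_one]
  simp [krylovFrame, krylovMatrix, i₀]

theorem krylovFrame_mul_normalForm (p : EnhancedSpace K ι) :
    krylovFrame e p * (normalForm e p).2.2 = p.2.2 * krylovFrame e p := by
  nontriviality K
  obtain rfl : p.2.2.charpoly.natDegree = d := by
    simpa using Fintype.card_congr e
  simp only [krylovFrame, normalForm]
  rw [submatrix_mul_equiv, krylovMatrix_mul_companionMatrix p.2.2.charpoly_monic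
    p.2.2.aeval_self_charpoly]
  rfl

theorem krylovFrame_act_normalForm {p : EnhancedSpace K ι} (hp : IsUnit (krylovFrame e p)) :
    (krylovFrame e p *ᵥ (normalForm e p).1, (normalForm e p).2.1 ᵥ* (krylovFrame e p)⁻¹,
      krylovFrame e p * (normalForm e p).2.2 * (krylovFrame e p)⁻¹) = p := by
  have hdet := (isUnit_iff_isUnit_det _).mp hp
  rw [krylovFrame_mulVec_normalForm, krylovFrame_mul_normalForm,
    mul_nonsing_inv_cancel_right _ _ hdet]
  simp [normalForm, vecMul_vecMul, mul_nonsing_inv _ hdet]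

theorem apply_normalForm_mem {S : Subalgebra K (EnhancedSpace K ι → K)}
    (hcharpoly : ∀ k, (fun p ↦ p.2.2.charpoly.coeff k) ∈ S)
    (hpairing : ∀ k : ℕ, (fun p ↦ p.2.1 ⬝ᵥ (p.2.2 ^ k *ᵥ p.1)) ∈ S)
    {F : EnhancedSpace K ι → K} (hF : F ∈ Algebra.adjoin K (coordinates K ι)) :
    (fun p ↦ F (normalForm e p)) ∈ S := by
  induction hF using Algebra.adjoin_induction with
  | mem f hf =>
    rcases hf with (⟨i, rfl⟩ | ⟨i, rfl⟩) | ⟨i, j, rfl⟩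
    · exact S.algebraMap_mem (if (e i : ℕ) = 0 then 1 else 0)
    · exact hpairing (e i)
    · simp only [normalForm, submatrix_apply, companionMatrix, of_apply]
      split_ifs with h
      · exact S.algebraMap_mem ((Pi.single ⟨e j + 1, h⟩ 1 : Fin d → K) (e i))
      · exact S.neg_mem (hcharpoly (e i))
  | algebraMap c => exact S.algebraMap_mem c
  | add f g _ _ hf hg => exact S.add_mem hf hg
  | mul f g _ _ hf hg => exact S.mul_mem hf hg

theorem exists_det_krylovFrame_ne_zero [IsDomain K] [Infinite K] :
    ∃ p : EnhancedSpace K ι, (krylovFrame e p).det ≠ 0 := by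
  let a : Fin d ↪ K := Fin.valEmbedding.trans (Infinite.natEmbedding K)
  refine ⟨(1, 0, diagonal (a ∘ e)), ?_⟩
  have frame_eq : krylovFrame e (1, 0, diagonal (a ∘ e)) = (vandermonde a).submatrix e e := by
    rw [krylovFrame, krylovMatrix_diagonal_one]
    rfl
  rw [frame_eq, det_submatrix_equiv_self, det_vandermonde_ne_zero_iff]
  exact a.injective

theorem det_krylovFrame_mem_adjoin_coordinates :
    (fun p : EnhancedSpace K ι ↦ (krylovFrame e p).det) ∈ Algebra.adjoin K (coordinates K ι) :=
  fun_det_mem fun i j ↦ pow_mulVec_mem_adjoin_coordinates (e j) i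

theorem apply_normalForm_mem_adjoin_coordinates {F : EnhancedSpace K ι → K}
    (hF : F ∈ Algebra.adjoin K (coordinates K ι)) :
    (fun p ↦ F (normalForm e p)) ∈ Algebra.adjoin K (coordinates K ι) :=
  apply_normalForm_mem e (fun_charpoly_coeff_mem matrix_entry_mem_adjoin_coordinates)
    (fun k ↦ fun_sum_mem _ fun i _ ↦ Subalgebra.mul_mem _
      (Algebra.subset_adjoin (Or.inl (Or.inr ⟨i, rfl⟩))) (pow_mulVec_mem_adjoin_coordinates k i)) hF

end NormalForm

theorem apply_normalForm_eq_of_invariant {ι K : Type*} [Fintype ι] [DecidableEq ι] [Field K]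
    [Infinite K] {d : ℕ} (e : ι ≃ Fin d) {F : EnhancedSpace K ι → K}
    (hpoly : F ∈ Algebra.adjoin K (coordinates K ι))
    (hinv : ∀ g : Matrix ι ι K, IsUnit g →
      ∀ p : EnhancedSpace K ι, F (g *ᵥ p.1, p.2.1 ᵥ* g⁻¹, g * p.2.2 * g⁻¹) = F p) :
    (fun p ↦ F (normalForm e p)) = F := by
  let D : EnhancedSpace K ι → K := fun p ↦ (krylovFrame e p).det
  let G : EnhancedSpace K ι → K := fun p ↦ F (normalForm e p)
  have mul_sub_eq_zero : D * (G - F) = 0 := by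
    funext p
    by_cases hp : IsUnit (krylovFrame e p)
    · have hGF := hinv _ hp (normalForm e p)
      rw [krylovFrame_act_normalForm e hp] at hGF
      simp [G, hGF]
    · have hD : (krylovFrame e p).det = 0 := by simpa [isUnit_iff_isUnit_det] using hp
      simp [D, hD]
  have hD : D ∈ Algebra.adjoin K (coordinates K ι) := det_krylovFrame_mem_adjoin_coordinates e
  have hsub : G - F ∈ Algebra.adjoin K (coordinates K ι) :=
    Subalgebra.sub_mem _ (apply_normalForm_mem_adjoin_coordinates e hpoly) hpoly
  have le_lines := adjoin_coordinates_le_polynomialOnLines K ι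
  obtain hD_zero | hsub_zero := eq_zero_or_eq_zero_of_mul_eq_zero_of_mem_polynomialOnLines
    (le_lines hD) (le_lines hsub) mul_sub_eq_zero
  · obtain ⟨q, hq⟩ := exists_det_krylovFrame_ne_zero (K := K) e
    exact absurd (congrFun hD_zero q) hq
  · exact sub_eq_zero.mp hsub_zero

theorem GL_invariants_enhanced_general {K ι : Type*} [Field K] [CharZero K] [Fintype ι]
    [DecidableEq ι] (F : EnhancedSpace K ι → K)
    (hpoly : F ∈ Algebra.adjoin K (coordinates K ι))
    (hinv : ∀ g : Matrix ι ι K, IsUnit g →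
      ∀ p : EnhancedSpace K ι, F (g *ᵥ p.1, p.2.1 ᵥ* g⁻¹, g * p.2.2 * g⁻¹) = F p) :
    F ∈ Algebra.adjoin K (invariantGenerators K ι) := by
  rw [← apply_normalForm_eq_of_invariant (Fintype.equivFin ι) hpoly hinv]
  refine apply_normalForm_mem _ (fun_charpoly_coeff_mem_of_trace_pow_mem fun k hk ↦ ?_)
    (fun k ↦ ?_) hpoly
  · exact Algebra.subset_adjoin (Or.inl ⟨k, hk, rfl⟩)
  · exact Algebra.subset_adjoin (Or.inr ⟨k, rfl⟩)

/-- Every polynomial function `F` on `V ⊕ V* ⊕ gl_{2n}(ℂ)` invariant under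
`g·(v, ξ, A) = (g v, ξ g⁻¹, g A g⁻¹)` for all `g ∈ GL_{2n}(ℂ)` lies in the
ℂ-subalgebra generated by the traces `tr(A^k)` (`k ≥ 1`) and the functions
`Γ_k(v, ξ, A) = ξ A^k v` (`k ≥ 0`). -/
theorem GL_invariants_enhanced (n : ℕ) (hn : 1 ≤ n) (F : EnhPt n → ℂ)
    (hpoly : F ∈ Algebra.adjoin ℂ (coordFns n))
    (hinv : ∀ g : Matrix (Fin n ⊕ Fin n) (Fin n ⊕ Fin n) ℂ, IsUnit g →
      ∀ p : EnhPt n, F (g *ᵥ p.1, p.2.1 ᵥ* g⁻¹, g * p.2.2 * g⁻¹) = F p) :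
    F ∈ Algebra.adjoin ℂ (invGens n) :=
  GL_invariants_enhanced_general F hpoly hinv
end

section
/- Let x = [[1, 1],[0, 1]] ∈ GL₂(ℂ) and let β ∈ ℂ. The matrix h = [[−1, β],[0, −1]] satisfies h x h⁻¹ = x and σ(h) = h, but there exists no f ∈ GL₂(ℂ) with f x f⁻¹ = x, σ(f) = f, and f² = h. Thus the square-root assumption of the orbit embedding theorem fails at x, which is the obstruction preventing the map X/K → X̃/G from being injective. -/
open Matrix

/-- The matrix `I = diag(1, −1) ∈ GL₂(ℂ)`. -/
noncomputable def Imat : Matrix (Fin 2) (Fin 2) ℂ := !![1, 0; 0, -1]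

/-- The involutive anti-automorphism `σ(g) = I⁻¹ g⁻¹ I` of `GL₂(ℂ)`. -/
noncomputable def sig (g : Matrix (Fin 2) (Fin 2) ℂ) : Matrix (Fin 2) (Fin 2) ℂ :=
  Imat⁻¹ * g⁻¹ * Imat

/-!
A matrix `f` commuting with the unipotent `x` is upper triangular. If moreover `σ(f) = f`, that is
`f I f = I`, then the upper left entry of `f` squares to `1`, so `f²` has upper left entry `1`,
whereas that of `h` is `-1`.
-/

section TwistedInv

variable {n R : Type*} [Fintype n] [DecidableEq n] [CommRing R]

/-- The anti-automorphism `g ↦ J⁻¹ g⁻¹ J` of the general linear group attached to an invertible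
matrix `J`; on a singular `g` it takes the junk value `0`. For `J = diag(1, -1)` it is the `σ` of
the theorem. -/
noncomputable def twistedInv (J g : Matrix n n R) : Matrix n n R := J⁻¹ * g⁻¹ * J

theorem twistedInv_eq_self_iff {J g : Matrix n n R} (hJ : IsUnit J) (hg : IsUnit g) :
    twistedInv J g = g ↔ g * J * g = J := by
  lift J to (Matrix n n R)ˣ using hJ
  lift g to (Matrix n n R)ˣ using hg
  rw [twistedInv, ← coe_units_inv, ← coe_units_inv, mul_assoc, Units.inv_mul_eq_iff_eq_mul,
    Units.inv_mul_eq_iff_eq_mul, ← mul_assoc, eq_comm]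

theorem conj_eq_self_iff_commute {f : Matrix n n R} (hf : IsUnit f) (x : Matrix n n R) :
    f * x * f⁻¹ = x ↔ Commute f x := by
  lift f to (Matrix n n R)ˣ using hf
  rw [← coe_units_inv, Units.commute_iff_mul_inv_cancel]

end TwistedInv

section FinTwo

variable {R : Type*} [CommRing R]

variable (R) in
/-- The matrix `diag(1, -1)` over an arbitrary commutative ring; over `ℂ` it is `Imat`. -/
def signDiag : Matrix (Fin 2) (Fin 2) R := !![1, 0; 0, -1]

theorem isUnit_signDiag : IsUnit (signDiag R) := by
  simp [isUnit_iff_isUnit_det, signDiag, det_fin_two_of]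

theorem commute_upperToeplitz (a b c d : R) : Commute !![a, b; 0, a] !![c, d; 0, c] := by
  simp [commute_iff_eq, mul_comm, add_comm]

theorem isUnit_upperToeplitz {a : R} (ha : IsUnit a) (b : R) : IsUnit !![a, b; 0, a] := by
  simpa [isUnit_iff_isUnit_det, det_fin_two_of] using ha

theorem twistedInv_upperToeplitz {a : R} (ha : a * a = 1) (b : R) :
    twistedInv (signDiag R) !![a, b; 0, a] = !![a, b; 0, a] := by
  rw [twistedInv_eq_self_iff isUnit_signDiag (isUnit_upperToeplitz (.of_mul_eq_one a ha) b)]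
  simp [signDiag, ha, mul_comm]

theorem apply_one_zero_eq_zero_of_commute {f x : Matrix (Fin 2) (Fin 2) R} (hfx : Commute f x)
    (hx₁₀ : x 1 0 = 0) (hx₀₁ : IsLeftRegular (x 0 1)) : f 1 0 = 0 := by
  have h₀₀ : f 0 0 * x 0 0 = x 0 0 * f 0 0 + x 0 1 * f 1 0 := by
    simpa [mul_apply, hx₁₀] using congrFun₂ hfx.eq 0 0
  refine hx₀₁.mul_left_eq_zero_iff.mp ?_
  linear_combination -h₀₀

theorem mul_self_apply_zero_zero_of_twistedInv_eq_self {f : Matrix (Fin 2) (Fin 2) R}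
    (hf : IsUnit f) (hf₁₀ : f 1 0 = 0) (hσ : twistedInv (signDiag R) f = f) :
    (f * f) 0 0 = 1 := by
  have hfIf : f * signDiag R * f = signDiag R :=
    (twistedInv_eq_self_iff isUnit_signDiag hf).mp hσ
  simpa [signDiag, mul_apply, hf₁₀] using congrFun₂ hfIf 0 0

end FinTwo

theorem obstruction_at_unipotent_general {R : Type*} [CommRing R] (h2 : (2 : R) ≠ 0) (β : R) :
    IsUnit !![-1, β; 0, -1] ∧
    !![-1, β; 0, -1] * !![1, 1; 0, 1] * !![-1, β; 0, -1]⁻¹ = !![1, 1; 0, 1] ∧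
    twistedInv (signDiag R) !![-1, β; 0, -1] = !![-1, β; 0, -1] ∧
    ¬ ∃ f : Matrix (Fin 2) (Fin 2) R, IsUnit f ∧ f * !![1, 1; 0, 1] * f⁻¹ = !![1, 1; 0, 1] ∧
        twistedInv (signDiag R) f = f ∧ f * f = !![-1, β; 0, -1] := by
  have hh : IsUnit !![-1, β; 0, -1] := isUnit_upperToeplitz isUnit_one.neg β
  refine ⟨hh, (conj_eq_self_iff_commute hh _).mpr (commute_upperToeplitz ..),
    twistedInv_upperToeplitz (by ring) β, ?_⟩
  rintro ⟨f, hf, hfx, hσ, hsq⟩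
  have hf₁₀ : f 1 0 = 0 :=
    apply_one_zero_eq_zero_of_commute ((conj_eq_self_iff_commute hf _).mp hfx) rfl
      isRegular_one.left
  have hneg : (-1 : R) = 1 :=
    calc (-1 : R) = (f * f) 0 0 := by simp [hsq]
      _ = 1 := mul_self_apply_zero_zero_of_twistedInv_eq_self hf hf₁₀ hσ
  exact h2 (by linear_combination -hneg)

/-- For `x = [[1,1],[0,1]]` and any `β ∈ ℂ`, the matrix `h = [[−1,β],[0,−1]]`
stabilizes `x` under conjugation and is `σ`-fixed, yet `h` has no `σ`-fixed
square root in the stabilizer of `x`: the square-root assumption of the orbit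
embedding theorem fails at `x`. -/
theorem obstruction_at_unipotent (β : ℂ) :
    IsUnit (!![(-1 : ℂ), β; 0, -1]) ∧
    !![(-1 : ℂ), β; 0, -1] * !![(1 : ℂ), 1; 0, 1] * (!![(-1 : ℂ), β; 0, -1])⁻¹ =
      !![(1 : ℂ), 1; 0, 1] ∧
    sig !![(-1 : ℂ), β; 0, -1] = !![(-1 : ℂ), β; 0, -1] ∧
    ¬ ∃ f : Matrix (Fin 2) (Fin 2) ℂ, IsUnit f ∧
        f * !![(1 : ℂ), 1; 0, 1] * f⁻¹ = !![(1 : ℂ), 1; 0, 1] ∧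
        sig f = f ∧ f * f = !![(-1 : ℂ), β; 0, -1] :=
  obstruction_at_unipotent_general two_ne_zero β
end

section
/- Let x = diag(1, −1) ∈ GL₂(ℂ). The matrix h = −1₂ (minus the identity) satisfies h x h⁻¹ = x and σ(h) = h, but there exists no f ∈ GL₂(ℂ) with f x f⁻¹ = x, σ(f) = f, and f² = h. Indeed G_x^σ = {diag(α, δ) : α = ±1, δ = ±1}, and the square of every element of G_x^σ is the identity. -/
open Matrix

/-! If `x` is diagonal with distinct diagonal entries, its centralizer consists of the diagonal
matrices. These commute with the diagonal matrix `I`, so `σ` restricts to inversion on the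
stabilizer of `x`, and a `σ`-fixed element of the stabilizer is its own inverse. In particular its
square is never `-1`. -/

theorem exists_fin_two_pi {α : Type*} {P : (Fin 2 → α) → Prop} :
    (∃ f, P f) ↔ ∃ a b, P ![a, b] :=
  (FinVec.exists_iff P).symm

section DiagonalInvolution

variable {n R : Type*} [Fintype n] [DecidableEq n] [Ring R] [NoZeroDivisors R]

theorem diagonal_mul_self_eq_one_iff {d : n → R} :
    diagonal d * diagonal d = 1 ↔ ∀ i, d i = 1 ∨ d i = -1 := by
  simp only [diagonal_mul_diagonal, diagonal_eq_one, funext_iff, Pi.one_apply,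
    mul_self_eq_one_iff]

theorem isDiag_and_mul_self_eq_one_iff {g : Matrix n n R} :
    g.IsDiag ∧ g * g = 1 ↔ ∃ ε : n → R, (∀ i, ε i = 1 ∨ ε i = -1) ∧ g = diagonal ε := by
  constructor
  · rintro ⟨hdiag, hsq⟩
    rw [← hdiag.diagonal_diag, diagonal_mul_self_eq_one_iff] at hsq
    exact ⟨g.diag, hsq, hdiag.diagonal_diag.symm⟩
  · rintro ⟨ε, hε, rfl⟩
    exact ⟨isDiag_diagonal ε, diagonal_mul_self_eq_one_iff.2 hε⟩

end DiagonalInvolution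

section Centralizer

variable {n R : Type*} [Fintype n] [DecidableEq n] [CommRing R]

theorem mul_mul_inv_eq_self_iff_commute {g x : Matrix n n R} (hg : IsUnit g) :
    g * x * g⁻¹ = x ↔ Commute g x := by
  have hdet : IsUnit g.det := (isUnit_iff_isUnit_det g).1 hg
  constructor
  · intro h
    calc g * x = g * x * g⁻¹ * g := (nonsing_inv_mul_cancel_right g _ hdet).symm
      _ = x * g := by rw [h]
  · intro h
    rw [h.eq, mul_nonsing_inv_cancel_right g _ hdet]

theorem commute_diagonal_iff_isDiag [NoZeroDivisors R] {g : Matrix n n R} {d : n → R}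
    (hd : Function.Injective d) : Commute g (diagonal d) ↔ g.IsDiag := by
  constructor
  · intro h i j hij
    have hentry : g i j * d j = d i * g i j := by
      simpa only [mul_diagonal, diagonal_mul] using congr_fun₂ h.eq i j
    have hprod : (d i - d j) * g i j = 0 := by linear_combination -hentry
    exact (mul_eq_zero.1 hprod).resolve_left (sub_ne_zero.2 (hd.ne hij))
  · intro h
    rw [← h.diagonal_diag]
    exact commute_diagonal _ _

theorem inv_eq_self_iff_mul_self_eq_one {g : Matrix n n R} (hg : IsUnit g) :
    g⁻¹ = g ↔ g * g = 1 := by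
  refine ⟨fun h => ?_, inv_eq_left_inv⟩
  nth_rw 1 [← h]
  exact nonsing_inv_mul g ((isUnit_iff_isUnit_det g).1 hg)

end Centralizer

section FixedStabilizer

variable {n R : Type*} [Fintype n] [DecidableEq n] [CommRing R]

/-- The set `G_x^σ` of elements of `GLₙ(R)` that stabilize `x` under conjugation and are fixed by
`σ = twistedInv J`, encoded as a set of matrices. -/
def fixedStabilizer (J x : Matrix n n R) : Set (Matrix n n R) :=
  {g | IsUnit g ∧ g * x * g⁻¹ = x ∧ twistedInv J g = g}

theorem twistedInv_eq_inv_of_commute {J g : Matrix n n R} (hJ : IsUnit J) (h : Commute g J) :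
    twistedInv J g = g⁻¹ := by
  have hJdet : IsUnit J.det := (isUnit_iff_isUnit_det J).1 hJ
  calc J⁻¹ * g⁻¹ * J = (g * J)⁻¹ * J := by rw [Matrix.mul_inv_rev]
    _ = g⁻¹ * J⁻¹ * J := by rw [h.eq, Matrix.mul_inv_rev]
    _ = g⁻¹ := nonsing_inv_mul_cancel_right J _ hJdet

variable [NoZeroDivisors R] {d e : n → R}

theorem mem_fixedStabilizer_diagonal_iff {g : Matrix n n R} (he : IsUnit e)
    (hd : Function.Injective d) :
    g ∈ fixedStabilizer (diagonal e) (diagonal d) ↔ g.IsDiag ∧ g * g = 1 := by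
  have fixed_iff (hg : IsUnit g) (hdiag : g.IsDiag) :
      twistedInv (diagonal e) g = g ↔ g * g = 1 := by
    have hcomm : Commute g (diagonal e) := by
      rw [← hdiag.diagonal_diag]
      exact commute_diagonal _ _
    rw [twistedInv_eq_inv_of_commute (isUnit_diagonal.2 he) hcomm,
      inv_eq_self_iff_mul_self_eq_one hg]
  constructor
  · rintro ⟨hg, hstab, hfix⟩
    have hdiag : g.IsDiag :=
      (commute_diagonal_iff_isDiag hd).1 ((mul_mul_inv_eq_self_iff_commute hg).1 hstab)
    exact ⟨hdiag, (fixed_iff hg hdiag).1 hfix⟩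
  · rintro ⟨hdiag, hsq⟩
    have hg : IsUnit g := IsUnit.of_mul_eq_one g hsq
    exact ⟨hg, (mul_mul_inv_eq_self_iff_commute hg).2 ((commute_diagonal_iff_isDiag hd).2 hdiag),
      (fixed_iff hg hdiag).2 hsq⟩

theorem obstruction_at_diag_sign_general [Nonempty n] [NeZero (2 : R)] (he : IsUnit e)
    (hd : Function.Injective d) :
    -1 ∈ fixedStabilizer (diagonal e) (diagonal d) ∧
    (¬ ∃ f ∈ fixedStabilizer (diagonal e) (diagonal d), f * f = -1) ∧
    fixedStabilizer (diagonal e) (diagonal d) =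
      {m | ∃ ε : n → R, (∀ i, ε i = 1 ∨ ε i = -1) ∧ m = diagonal ε} ∧
    ∀ g ∈ fixedStabilizer (diagonal e) (diagonal d), g * g = 1 := by
  simp only [Set.ext_iff, mem_fixedStabilizer_diagonal_iff he hd]
  refine ⟨⟨isDiag_one.neg, by simp⟩, ?_, fun g => isDiag_and_mul_self_eq_one_iff,
    fun g hg => hg.2⟩
  rintro ⟨f, ⟨-, hsq⟩, hf⟩
  obtain ⟨i⟩ := ‹Nonempty n›
  have hone : (1 : R) = -1 := by
    simpa using congr_fun₂ (hsq.symm.trans hf) i i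
  exact two_ne_zero (by linear_combination hone : (2 : R) = 0)

end FixedStabilizer

/-- For `x = diag(1, −1)`, the matrix `h = −1₂` stabilizes `x` under conjugation
and is `σ`-fixed, but has no `σ`-fixed square root in the stabilizer of `x`.
Indeed `G_x^σ = {diag(α,δ) : α = ±1, δ = ±1}` and every element of `G_x^σ`
squares to the identity. -/
theorem obstruction_at_diag_sign :
    IsUnit (-1 : Matrix (Fin 2) (Fin 2) ℂ) ∧
    (-1 : Matrix (Fin 2) (Fin 2) ℂ) * !![(1 : ℂ), 0; 0, -1] *
        (-1 : Matrix (Fin 2) (Fin 2) ℂ)⁻¹ = !![(1 : ℂ), 0; 0, -1] ∧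
    sig (-1 : Matrix (Fin 2) (Fin 2) ℂ) = (-1 : Matrix (Fin 2) (Fin 2) ℂ) ∧
    (¬ ∃ f : Matrix (Fin 2) (Fin 2) ℂ, IsUnit f ∧
        f * !![(1 : ℂ), 0; 0, -1] * f⁻¹ = !![(1 : ℂ), 0; 0, -1] ∧
        sig f = f ∧ f * f = (-1 : Matrix (Fin 2) (Fin 2) ℂ)) ∧
    ({g : Matrix (Fin 2) (Fin 2) ℂ | IsUnit g ∧
        g * !![(1 : ℂ), 0; 0, -1] * g⁻¹ = !![(1 : ℂ), 0; 0, -1] ∧ sig g = g} =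
      {m | ∃ α δ : ℂ, (α = 1 ∨ α = -1) ∧ (δ = 1 ∨ δ = -1) ∧ m = !![α, 0; 0, δ]}) ∧
    (∀ g : Matrix (Fin 2) (Fin 2) ℂ, IsUnit g →
      g * !![(1 : ℂ), 0; 0, -1] * g⁻¹ = !![(1 : ℂ), 0; 0, -1] → sig g = g →
      g * g = 1) := by
  have hunit : IsUnit ![(1 : ℂ), -1] := by simp [Pi.isUnit_iff, Fin.forall_fin_two]
  have hinj : Function.Injective ![(1 : ℂ), -1] := by
    norm_num [Function.Injective, Fin.forall_fin_two]
  simpa only [fixedStabilizer, twistedInv, sig, Imat, diagonal_fin_two, exists_fin_two_pi,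
    Fin.forall_fin_two, cons_val_zero, cons_val_one, and_assoc, and_imp, Set.mem_ofPred_eq] using
    obstruction_at_diag_sign_general hunit hinj
end

section
/- Let R ⊂ GL₂(ℂ) be the set consisting of: all matrices [[a, b],[b, a]] with a² − b² = 1 and (Re b > 0, or b = i t for some real t ≥ 0); the matrices [[ε, 1],[0, ε]] for ε = ±1; the matrices [[ε, 0],[1, ε]] for ε = ±1; and the matrices [[ε, 0],[0, −ε]] for ε = ±1. Then R is a complete set of representatives of the K-orbits in X: every g ∈ X is conjugate by an invertible diagonal matrix to exactly one element of R. -/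
/-!
Conjugation by `diag(s, t)` fixes the diagonal of a `2 × 2` matrix and scales its off-diagonal
entries by `s / t` and `t / s`. So the orbits are classified by the diagonal, the product of the
off-diagonal entries, and which of these entries vanish. Since `σ` maps `[[p, q], [u, v]]` to
`(pv - qu)⁻¹ [[v, q], [u, p]]`, the invertible fixed points have determinant `1` and `p = v`, or are
`± diag(1, -1)`. In the first case, if `q` and `u` vanish together, the orbit contains
`[[p, b], [b, p]]` exactly for the two square roots `b` of `qu`, and the half-plane condition
selects one of them.
-/

open Matrix

/-- The proposed set of representatives `R ⊂ GL₂(ℂ)`: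
matrices `[[a,b],[b,a]]` with `a² − b² = 1` and (`Re b > 0` or `b ∈ i·ℝ_{≥0}`);
the matrices `[[ε,1],[0,ε]]`, `[[ε,0],[1,ε]]` and `[[ε,0],[0,−ε]]` for `ε = ±1`. -/
def Reps : Set (Matrix (Fin 2) (Fin 2) ℂ) :=
  {m | ∃ a b : ℂ, a ^ 2 - b ^ 2 = 1 ∧
      (0 < b.re ∨ ∃ t : ℝ, 0 ≤ t ∧ b = Complex.I * (t : ℂ)) ∧ m = !![a, b; b, a]} ∪
  {m | ∃ ε : ℂ, (ε = 1 ∨ ε = -1) ∧ m = !![ε, 1; 0, ε]} ∪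
  {m | ∃ ε : ℂ, (ε = 1 ∨ ε = -1) ∧ m = !![ε, 0; 1, ε]} ∪
  {m | ∃ ε : ℂ, (ε = 1 ∨ ε = -1) ∧ m = !![ε, 0; 0, -ε]}

section DiagConj

variable {F : Type*} [Field F] {g h k : Matrix (Fin 2) (Fin 2) F}

/-- `g` and `h` lie in the same orbit of the invertible diagonal matrices acting by conjugation.
The condition `s * t ≠ 0` expresses that `diag(s, t)` is invertible. -/
def DiagConj (g h : Matrix (Fin 2) (Fin 2) F) : Prop :=
  ∃ s t : F, s * t ≠ 0 ∧ !![s, 0; 0, t] * g * (!![s, 0; 0, t])⁻¹ = h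

theorem diag_mul_mul_diag_inv {s t : F} (hst : s * t ≠ 0) (g : Matrix (Fin 2) (Fin 2) F) :
    !![s, 0; 0, t] * g * (!![s, 0; 0, t])⁻¹ =
      !![g 0 0, s * g 0 1 / t; t * g 1 0 / s, g 1 1] := by
  obtain ⟨hs, ht⟩ := mul_ne_zero_iff.mp hst
  have hinv : (!![s, 0; 0, t])⁻¹ = !![s⁻¹, 0; 0, t⁻¹] :=
    inv_eq_right_inv (by simp [hs, ht, one_fin_two])
  rw [hinv, eta_fin_two g]
  ext i j
  fin_cases i <;> fin_cases j <;> simp [field]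

theorem diagConj_iff :
    DiagConj g h ↔ g 0 0 = h 0 0 ∧ g 1 1 = h 1 1 ∧ g 0 1 * g 1 0 = h 0 1 * h 1 0 ∧
      (g 0 1 = 0 ↔ h 0 1 = 0) ∧ (g 1 0 = 0 ↔ h 1 0 = 0) := by
  constructor
  · rintro ⟨s, t, hst, rfl⟩
    obtain ⟨hs, ht⟩ := mul_ne_zero_iff.mp hst
    rw [diag_mul_mul_diag_inv hst]
    simp [hs, ht, field]
  · rintro ⟨h00, h11, hmul, h01, h10⟩
    suffices ∃ s t : F, s * t ≠ 0 ∧ s * g 0 1 / t = h 0 1 ∧ t * g 1 0 / s = h 1 0 by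
      obtain ⟨s, t, hst, hs, ht⟩ := this
      exact ⟨s, t, hst, by rw [diag_mul_mul_diag_inv hst, hs, ht, h00, h11, ← eta_fin_two]⟩
    by_cases hq : g 0 1 = 0
    · by_cases hu : g 1 0 = 0
      · exact ⟨1, 1, by simp, by simp [hq, h01.mp hq], by simp [hu, h10.mp hu]⟩
      · exact ⟨g 1 0, h 1 0, mul_ne_zero hu (mt h10.mpr hu), by simp [hq, h01.mp hq],
          mul_div_cancel_right₀ _ hu⟩
    · have hq' : h 0 1 ≠ 0 := mt h01.mpr hq
      exact ⟨h 0 1, g 0 1, mul_ne_zero hq' hq, mul_div_cancel_right₀ _ hq,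
        by rw [hmul, mul_div_cancel_left₀ _ hq']⟩

theorem DiagConj.refl (g : Matrix (Fin 2) (Fin 2) F) : DiagConj g g := by
  simp only [diagConj_iff, and_self]

theorem DiagConj.symm (hgh : DiagConj g h) : DiagConj h g := by
  grind [diagConj_iff]

theorem DiagConj.trans (hgh : DiagConj g h) (hhk : DiagConj h k) : DiagConj g k := by
  grind [diagConj_iff]

end DiagConj

/-- The half-plane of values allowed for `b` in the matrices `[[a, b], [b, a]]` of `Reps`: it
contains exactly one of `b` and `-b` for each `b ≠ 0`. The bounding ray `i ℝ_{≥0}` is written with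
a real parameter so as to match `Reps` definitionally. -/
def principalHalfPlane : Set ℂ :=
  {b | 0 < b.re ∨ ∃ t : ℝ, 0 ≤ t ∧ b = Complex.I * (t : ℂ)}

theorem mem_principalHalfPlane_iff {b : ℂ} :
    b ∈ principalHalfPlane ↔ 0 < b.re ∨ b.re = 0 ∧ 0 ≤ b.im := by
  refine or_congr_right ⟨?_, fun ⟨hre, him⟩ ↦ ⟨b.im, him, ?_⟩⟩
  · rintro ⟨t, ht, rfl⟩
    simpa using ht
  · apply Complex.ext <;> simp [hre]

theorem neg_mem_principalHalfPlane_iff {b : ℂ} (hb : b ≠ 0) :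
    -b ∈ principalHalfPlane ↔ b ∉ principalHalfPlane := by
  have hne : b.re ≠ 0 ∨ b.im ≠ 0 := by
    contrapose! hb
    exact Complex.ext hb.1 hb.2
  simp only [mem_principalHalfPlane_iff, Complex.neg_re, Complex.neg_im]
  grind

theorem injOn_sq_principalHalfPlane : Set.InjOn (fun b : ℂ ↦ b ^ 2) principalHalfPlane := by
  intro b hb c hc hbc
  rcases sq_eq_sq_iff_eq_or_eq_neg.mp hbc with h | rfl
  · exact h
  · by_cases hc0 : c = 0
    · simp [hc0]
    · exact absurd hc ((neg_mem_principalHalfPlane_iff hc0).mp hb)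

theorem exists_mem_principalHalfPlane_sq_eq (z : ℂ) : ∃ b ∈ principalHalfPlane, b ^ 2 = z := by
  obtain ⟨w, hw⟩ := IsAlgClosed.exists_pow_nat_eq z two_pos
  by_cases hmem : w ∈ principalHalfPlane
  · exact ⟨w, hmem, hw⟩
  · have hw0 : w ≠ 0 := by
      rintro rfl
      exact hmem (mem_principalHalfPlane_iff.mpr (by simp))
    exact ⟨-w, (neg_mem_principalHalfPlane_iff hw0).mpr hmem, by rw [neg_sq, hw]⟩

theorem sig_fin_two_of (p q u v : ℂ) :
    sig !![p, q; u, v] = (p * v - q * u)⁻¹ • !![v, q; u, p] := by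
  have hI : Imat⁻¹ = Imat := inv_eq_right_inv (by simp [Imat, one_fin_two])
  rw [sig, hI, inv_def, adjugate_fin_two_of, det_fin_two_of, Ring.inverse_eq_inv']
  simp [Imat]

theorem eq_and_det_eq_one_or_of_sig_eq_self {p q u v : ℂ} (hg : IsUnit !![p, q; u, v])
    (hfix : sig !![p, q; u, v] = !![p, q; u, v]) :
    (v = p ∧ p ^ 2 - q * u = 1) ∨ ((p = 1 ∨ p = -1) ∧ q = 0 ∧ u = 0 ∧ v = -p) := by
  have hdet : p * v - q * u ≠ 0 := by
    simpa only [isUnit_iff_isUnit_det, det_fin_two_of, isUnit_iff_ne_zero] using hg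
  rw [sig_fin_two_of, inv_smul_eq_iff₀ hdet] at hfix
  obtain ⟨d, hd⟩ : ∃ d, p * v - q * u = d := ⟨_, rfl⟩
  rw [hd] at hdet hfix
  obtain ⟨⟨hv, hq⟩, hu, hp⟩ : (v = d * p ∧ q = d * q) ∧ u = d * u ∧ p = d * v := by
    simpa using hfix
  have hd_sq : d ^ 2 = 1 := by
    refine mul_right_cancel₀ hdet ?_
    calc d ^ 2 * d = (d * v) * (d * p) - (d * q) * (d * u) := by
          nth_rewrite 2 [← hd]
          ring
      _ = 1 * d := by rw [← hv, ← hp, ← hq, ← hu, hd, one_mul]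
  rcases sq_eq_one_iff.mp hd_sq with rfl | rfl
  · obtain rfl : v = p := by rw [hv, one_mul]
    exact .inl ⟨rfl, by rw [sq, hd]⟩
  · obtain rfl : q = 0 := self_eq_neg.mp (by rwa [neg_one_mul] at hq)
    obtain rfl : u = 0 := self_eq_neg.mp (by rwa [neg_one_mul] at hu)
    obtain rfl : v = -p := by rw [hv, neg_one_mul]
    exact .inr ⟨sq_eq_one_iff.mp (by linear_combination -hd), rfl, rfl, rfl⟩

theorem exists_mem_Reps_diagConj {g : Matrix (Fin 2) (Fin 2) ℂ} (hg : IsUnit g)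
    (hfix : sig g = g) : ∃ r ∈ Reps, DiagConj g r := by
  obtain ⟨p, q, u, v, rfl⟩ : ∃ p q u v, g = !![p, q; u, v] := ⟨_, _, _, _, eta_fin_two g⟩
  rcases eq_and_det_eq_one_or_of_sig_eq_self hg hfix with ⟨rfl, hdet⟩ | ⟨hp, rfl, rfl, rfl⟩
  · by_cases hqu : q = 0 ↔ u = 0
    · obtain ⟨b, hb, hb_sq⟩ := exists_mem_principalHalfPlane_sq_eq (q * u)
      refine ⟨!![v, b; b, v], .inl <| .inl <| .inl ⟨v, b, by rw [hb_sq, hdet], hb, rfl⟩, ?_⟩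
      have hb0 : b = 0 ↔ q = 0 ∧ u = 0 := by
        rw [← sq_eq_zero_iff, hb_sq, mul_eq_zero]
        tauto
      simp [diagConj_iff, ← sq, hb_sq, hb0, hqu]
    · have hmul : q * u = 0 := by
        rw [mul_eq_zero]
        tauto
      have hv : v = 1 ∨ v = -1 := sq_eq_one_iff.mp (by rw [← hdet, hmul, sub_zero])
      by_cases hq : q = 0
      · refine ⟨!![v, 0; 1, v], .inl <| .inr ⟨v, hv, rfl⟩, ?_⟩
        have hu : u ≠ 0 := by tauto
        simp [diagConj_iff, hq, hu]
      · refine ⟨!![v, 1; 0, v], .inl <| .inl <| .inr ⟨v, hv, rfl⟩, ?_⟩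
        have hu : u = 0 := by tauto
        simp [diagConj_iff, hq, hu]
  · exact ⟨!![p, 0; 0, -p], .inr ⟨p, hp, rfl⟩, .refl _⟩

theorem DiagConj.eq_of_mem_Reps {r r' : Matrix (Fin 2) (Fin 2) ℂ} (h : DiagConj r r')
    (hr : r ∈ Reps) (hr' : r' ∈ Reps) : r = r' := by
  rw [diagConj_iff] at h
  rcases hr with ((⟨a, b, -, hb, rfl⟩ | ⟨ε, -, rfl⟩) | ⟨ε, -, rfl⟩) | ⟨ε, -, rfl⟩ <;>
  rcases hr' with ((⟨a', b', -, hb', rfl⟩ | ⟨ε', -, rfl⟩) | ⟨ε', -, rfl⟩) | ⟨ε', -, rfl⟩ <;>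
  simp only [of_apply, cons_val', cons_val_zero, cons_val_one, cons_val_fin_one] at h
  · obtain ⟨rfl, -, hmul, -⟩ := h
    obtain rfl : b = b' := injOn_sq_principalHalfPlane hb hb' (by simpa only [sq] using hmul)
    rfl
  -- The vanishing of the two off-diagonal entries and the diagonal settle every other pair.
  all_goals grind

/-- `R` is a complete set of representatives of the `K`-orbits in
`X = {g ∈ GL₂(ℂ) : σ(g) = g}`: every `g ∈ X` is conjugate by an invertible
diagonal matrix to exactly one element of `R`. -/
theorem complete_set_of_representatives
    (g : Matrix (Fin 2) (Fin 2) ℂ) (hg : IsUnit g) (hfix : sig g = g) :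
    ∃! r : Matrix (Fin 2) (Fin 2) ℂ, r ∈ Reps ∧
      ∃ s t : ℂ, s * t ≠ 0 ∧ !![s, 0; 0, t] * g * (!![s, 0; 0, t])⁻¹ = r := by
  obtain ⟨r, hr, hgr⟩ := exists_mem_Reps_diagConj hg hfix
  refine ⟨r, ⟨hr, hgr⟩, fun r' ⟨hr', hgr'⟩ ↦ ?_⟩
  have hr'r : DiagConj r' r := (DiagConj.symm hgr').trans hgr
  exact hr'r.eq_of_mem_Reps hr' hr
end
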